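/- For every integer d ≥ 1 there exist a constant c₉ = c₉(d) < ∞ and a translation-equivariant matching rule Φ such that for all real r ≥ 2, ℙ(Z_Φ > r) ≤ c₉ r^{−β'} (log r)², where β' = β'(d) = d/(d+2). -/

import Mathlib

open MeasureTheory ENNReal

noncomputable section

/-- Sites: the lattice `ℤ^d`. -/
abbrev Site (d : ℕ) := Fin d → ℤ

/-- Configurations: elements of `{0,1}^{ℤ^d}`, encoded with `Bool`. -/
abbrev Config (d : ℕ) := Site d → Bool

/-- The translation `θ^z` acting on configurations: `(θ^z γ)(x) = γ(x - z)`. -/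
def shiftCfg {d : ℕ} (z : Site d) (γ : Config d) : Config d := fun x => γ (x - z)

/-- `φ` is a matching on `γ`: an involutive bijection matching ones to zeros. -/
def IsMatching {d : ℕ} (γ : Config d) (φ : Site d → Site d) : Prop :=
  Function.Bijective φ ∧ (∀ x, φ (φ x) = x) ∧ ∀ x, γ (φ x) = !(γ x)

/-- `Φ` is a matching rule with respect to the measure `P`. -/
def IsMatchingRule {d : ℕ} (P : Measure (Config d)) (Φ : Config d → Site d → Site d) : Prop :=
  (∀ x : Site d, Measurable fun γ => Φ γ x) ∧ ∀ᵐ γ ∂P, IsMatching γ (Φ γ)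

/-- `Φ` is translation-equivariant with respect to `P`. -/
def IsEquivariant {d : ℕ} (P : Measure (Config d)) (Φ : Config d → Site d → Site d) : Prop :=
  ∀ z x : Site d, ∀ᵐ γ ∂P, Φ (shiftCfg z γ) (x + z) = Φ γ x + z

/-- `P` is the product measure with i.i.d. Bernoulli(1/2) coordinates, characterized by
its values on cylinder events. -/
def IsBernoulliHalfProduct {d : ℕ} (P : Measure (Config d)) : Prop :=
  IsProbabilityMeasure P ∧
    ∀ (s : Finset (Site d)) (f : Site d → Bool),
      P {γ | ∀ x ∈ s, γ x = f x} = (1 / 2 : ℝ≥0∞) ^ s.card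

/-- `Z_Φ(γ) = ‖Φ(γ, 0)‖`, the `ℓ^∞` distance from the origin to its partner. -/
def ZΦ {d : ℕ} (Φ : Config d → Site d → Site d) (γ : Config d) : ℝ := ‖Φ γ 0‖

/-- Embedding of the lattice in `ℝ^d`. -/
def toR {d : ℕ} (x : Site d) : Fin d → ℝ := fun i => (x i : ℝ)

/-- The first standard basis vector `e₁`. -/
def e1 (d : ℕ) : Site d := fun i => if (i : ℕ) = 0 then 1 else 0

/-- `x` is a `k`-seed for `γ`. -/
def IsSeed {d : ℕ} (γ : Config d) (k : ℕ) (x : Site d) : Prop :=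
  γ x = true ∧ ∀ n : ℕ, 1 ≤ n → n ≤ k - 1 → γ (x + (n : ℤ) • e1 d) = false

/-- `r_k = (2^k k²)^{1/d} + 1/2`. -/
def rr (d k : ℕ) : ℝ := ((2 : ℝ) ^ k * (k : ℝ) ^ 2) ^ ((d : ℝ)⁻¹) + 1 / 2

/-- The shift `s_k = ⌊100 r_k⌋ e₁`. -/
def ss (d k : ℕ) : Site d := ⌊(100 : ℝ) * rr d k⌋ • e1 d

/-- `W_k(γ)`: the union of all `k`-cutters. -/
def cutters {d : ℕ} (γ : Config d) (k : ℕ) : Set (Fin d → ℝ) :=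
  ⋃ x ∈ {x : Site d | IsSeed γ k (x - ss d k)}, {y : Fin d → ℝ | ‖y - toR x‖ = rr d k}

/-- The `k`-blob containing the point `p ∈ ℝ^d`: the connected component of `p` in the
complement of all `j`-cutters with `j > k`. -/
def blob {d : ℕ} (γ : Config d) (k : ℕ) (p : Fin d → ℝ) : Set (Fin d → ℝ) :=
  connectedComponentIn (⋃ j ∈ {j : ℕ | k < j}, cutters γ j)ᶜ p

/-- The `k`-clump of a site `x`: the lattice points of the `k`-blob containing `x`. -/
def clump {d : ℕ} (γ : Config d) (k : ℕ) (x : Site d) : Set (Site d) :=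
  {y : Site d | toR y ∈ blob γ k (toR x)}

/-- The event `E_k`: the cube `S(-s_k, r_k - 1)` contains a `k`-seed. -/
def Ek (d k : ℕ) : Set (Config d) :=
  {γ | ∃ y : Site d, IsSeed γ k y ∧ ‖toR y + toR (ss d k)‖ ≤ rr d k - 1}

/-- A `k`-seed lying in the annulus `S(-s_k, r_k + s) \ S(-s_k, r_k - s)`. -/
def SeedInAnnulus {d : ℕ} (γ : Config d) (k : ℕ) (s : ℝ) (y : Site d) : Prop :=
  IsSeed γ k y ∧ ‖toR y + toR (ss d k)‖ ≤ rr d k + s ∧ rr d k - s < ‖toR y + toR (ss d k)‖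

/-- The event `U_k(s)`: `S(-s_k, r_k + s) \ S(-s_k, r_k - s)` contains a `k`-seed. -/
def Uk (d : ℕ) (k : ℕ) (s : ℝ) : Set (Config d) :=
  {γ | ∃ y : Site d, SeedInAnnulus γ k s y}

/-- The event `C_k(s) = ∪_{j ≥ k} U_j(s)`. -/
def Ck (d : ℕ) (k : ℕ) (s : ℝ) : Set (Config d) :=
  {γ | ∃ j : ℕ, k ≤ j ∧ γ ∈ Uk d j s}

/-- `±1`-valued spin `2γ(x) - 1`. -/
def pm1 {d : ℕ} (γ : Config d) (y : Site d) : ℤ := if γ y then 1 else -1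

/-- `Φ` matches maximally within clumps: a.s. every clump is finite and the number of
sites of each `k`-clump `L` matched outside `L` equals `|Σ_{x ∈ L} (2γ(x) - 1)|`. -/
def MatchesMaximally {d : ℕ} (P : Measure (Config d))
    (Φ : Config d → Site d → Site d) : Prop :=
  ∀ᵐ γ ∂P, ∀ k : ℕ, 1 ≤ k → ∀ x : Site d,
    (clump γ k x).Finite ∧
      (({y ∈ clump γ k x | Φ γ y ∉ clump γ k x}.ncard : ℤ)
        = |∑ᶠ y ∈ clump γ k x, pm1 γ y|)

/-!
Call a row of `m_j ≈ log₂ (2 ^ (d * j) / j ^ 2)` consecutive zeros in the direction `e₁` a run of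
level `j`, and let each of them carve out the cube of radius `2 ^ j` around its first site. The
cells of level `k` are the sets of sites which no cube of a level `j ≥ k` separates; they increase
with `k`. Inside every cell of level `0`, then of level `1`, and so on, match as many of the
remaining zeros and ones as possible.

After the matching at level `k`, the unmatched sites of a cell `L` all have the same colour, so that
their number is `|∑_{x ∈ L} (2 γ(x) - 1)|`. Up to twice the number of sites within distance `s` of
the complement of `L`, this is at most the sum over `x ∈ L` of the absolute mean spin over the cube
of radius `s` around `x`. By mass transport, the origin is therefore unmatched with probability at
most `(2 s + 1) ^ (-d / 2)`, which is the second moment bound for the mean spin over a cube, plus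
twice the probability that the origin is within distance `s` of another cell, which is of order
`k ^ 2 s / 2 ^ k` by counting the runs of each level `j ≥ k` near the boundary of a cube. The choice
`s ≈ 2 ^ (2 k / (d + 2))` balances the two terms and gives `k ^ 2 2 ^ (-k d / (d + 2))`. Finally,
the run length is chosen so that with probability at least `1 - 2 ^ (-k)` some cube of level `k`
contains the origin, and then a site matched to the origin at level `k` is at distance at most
`2 ^ (k + 1)` from it.
-/

section RankMatching

variable {α β Ω : Type*} [LinearOrder β] {f : α → β}

/-- The position of `x` relative to a set `A` ordered by the injective key `f`: the number of
elements of `A` with a smaller key. It is only meaningful for finite `A`. -/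
def keyRank (f : α → β) (A : Set α) (x : α) : ℕ := {a ∈ A | f a < f x}.ncard

lemma keyRank_lt_keyRank {A : Set α} (hA : A.Finite) {x y : α} (hx : x ∈ A) (h : f x < f y) :
    keyRank f A x < keyRank f A y :=
  Set.ncard_lt_ncard
    ⟨fun _ ha => ⟨ha.1, ha.2.trans h⟩, fun hsub => lt_irrefl _ (hsub ⟨hx, h⟩).2⟩
    (hA.subset (Set.sep_subset _ _))

lemma injOn_keyRank (hf : f.Injective) {A : Set α} (hA : A.Finite) :
    Set.InjOn (keyRank f A) A := by
  intro x hx y hy h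
  rcases lt_trichotomy (f x) (f y) with hlt | heq | hgt
  · exact absurd h (keyRank_lt_keyRank hA hx hlt).ne
  · exact hf heq
  · exact absurd h (keyRank_lt_keyRank hA hy hgt).ne'

lemma keyRank_lt_ncard {A : Set α} (hA : A.Finite) {x : α} (hx : x ∈ A) :
    keyRank f A x < A.ncard :=
  Set.ncard_lt_ncard ⟨Set.sep_subset _ _, fun hsub => lt_irrefl _ (hsub hx).2⟩ hA

lemma exists_keyRank_eq (hf : f.Injective) {A : Set α} (hA : A.Finite) {n : ℕ}
    (hn : n < A.ncard) : ∃ x ∈ A, keyRank f A x = n := by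
  have himage : keyRank f A '' A = Set.Iio A.ncard := by
    refine Set.eq_of_subset_of_ncard_le ?_ ?_ (Set.finite_Iio _)
    · rintro _ ⟨x, hx, rfl⟩
      exact keyRank_lt_ncard hA hx
    · rw [(injOn_keyRank hf hA).ncard_image]
      simp [Set.ncard_eq_toFinset_card']
  exact himage.symm.subset hn

lemma keyRank_equiv (σ : α ≃ α) (hσ : ∀ a b, f (σ a) < f (σ b) ↔ f a < f b) (A : Set α) (x : α) :
    keyRank f A (σ x) = keyRank f (σ ⁻¹' A) x := by
  unfold keyRank
  rw [← Set.ncard_image_of_injective {a ∈ σ ⁻¹' A | f a < f x} σ.injective]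
  congr 1
  ext a
  constructor
  · rintro ⟨ha, hlt⟩
    exact ⟨σ.symm a, ⟨by simpa using ha, (hσ _ _).1 (by simpa using hlt)⟩, by simp⟩
  · rintro ⟨b, ⟨hb, hlt⟩, rfl⟩
    exact ⟨hb, (hσ _ _).2 hlt⟩

/-- `x` and `y` have opposite colours in `S` and the same rank within their colour classes, so
that they are partners when the two colour classes of `S` are matched in increasing order. -/
structure IsRankPair (f : α → β) (γ : α → Bool) (S : Set α) (x y : α) : Prop where
  finite : S.Finite
  left_mem : x ∈ S
  right_mem : y ∈ S
  color_right : γ y = !γ x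
  rank_eq : keyRank f {a ∈ S | γ a = γ x} x = keyRank f {a ∈ S | γ a = γ y} y

namespace IsRankPair

variable {γ : α → Bool} {S : Set α} {x y z : α}

lemma symm (h : IsRankPair f γ S x y) : IsRankPair f γ S y x :=
  ⟨h.finite, h.right_mem, h.left_mem, by simp [h.color_right], h.rank_eq.symm⟩

lemma ne (h : IsRankPair f γ S x y) : y ≠ x := by
  rintro rfl
  simpa using h.color_right

lemma right_unique (hf : f.Injective) (hy : IsRankPair f γ S x y) (hz : IsRankPair f γ S x z) :
    y = z := by
  have hcolor : γ z = γ y := hz.color_right.trans hy.color_right.symm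
  refine injOn_keyRank hf (A := {a ∈ S | γ a = γ y}) (hy.finite.subset (Set.sep_subset _ _))
    ⟨hy.right_mem, rfl⟩ ⟨hz.right_mem, hcolor⟩ ?_
  rw [← hy.rank_eq, hz.rank_eq, hcolor]

end IsRankPair

lemma isRankPair_equiv (σ : α ≃ α) (hσ : ∀ a b, f (σ a) < f (σ b) ↔ f a < f b) (γ : α → Bool)
    (S : Set α) (x y : α) :
    IsRankPair f γ S (σ x) (σ y) ↔ IsRankPair f (γ ∘ σ) (σ ⁻¹' S) x y := by
  constructor
  · rintro ⟨hfin, hx, hy, hcolor, hrank⟩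
    rw [keyRank_equiv σ hσ, keyRank_equiv σ hσ] at hrank
    exact ⟨hfin.preimage σ.injective.injOn, hx, hy, hcolor, hrank⟩
  · rintro ⟨hfin, hx, hy, hcolor, hrank⟩
    refine ⟨by simpa using hfin.image σ, hx, hy, hcolor, ?_⟩
    rw [keyRank_equiv σ hσ, keyRank_equiv σ hσ]
    exact hrank

open Classical in
/-- The partner of `x` when the two colour classes of `S` are matched in increasing order; it is
`x` itself when `x` has no partner. -/
def rankPartner (f : α → β) (γ : α → Bool) (S : Set α) (x : α) : α :=
  if h : ∃ y, IsRankPair f γ S x y then h.choose else x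

lemma rankPartner_eq_self {γ : α → Bool} {S : Set α} {x : α}
    (h : ∀ y, ¬ IsRankPair f γ S x y) : rankPartner f γ S x = x :=
  dif_neg (not_exists.2 h)

lemma isRankPair_rankPartner {γ : α → Bool} {S : Set α} {x : α}
    (h : rankPartner f γ S x ≠ x) : IsRankPair f γ S x (rankPartner f γ S x) := by
  have hex : ∃ y, IsRankPair f γ S x y := by
    by_contra hne
    exact h (rankPartner_eq_self (not_exists.1 hne))
  rw [rankPartner, dif_pos hex]
  exact hex.choose_spec

lemma IsRankPair.rankPartner_eq (hf : f.Injective) {γ : α → Bool} {S : Set α} {x y : α}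
    (h : IsRankPair f γ S x y) : rankPartner f γ S x = y := by
  have hex : ∃ y, IsRankPair f γ S x y := ⟨y, h⟩
  rw [rankPartner, dif_pos hex]
  exact hex.choose_spec.right_unique hf h

lemma rankPartner_eq_iff (hf : f.Injective) {γ : α → Bool} {S : Set α} {x y : α} :
    rankPartner f γ S x = y ↔
      IsRankPair f γ S x y ∨ (y = x ∧ ∀ z, ¬ IsRankPair f γ S x z) := by
  constructor
  · rintro rfl
    by_cases h : rankPartner f γ S x = x
    · exact Or.inr ⟨h, fun z hz => hz.ne ((hz.rankPartner_eq hf).symm.trans h)⟩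
    · exact Or.inl (isRankPair_rankPartner h)
  · rintro (h | ⟨rfl, h⟩)
    · exact h.rankPartner_eq hf
    · exact rankPartner_eq_self h

lemma rankPartner_equiv (hf : f.Injective) (σ : α ≃ α)
    (hσ : ∀ a b, f (σ a) < f (σ b) ↔ f a < f b) (γ : α → Bool) (S : Set α) (x : α) :
    rankPartner f γ S (σ x) = σ (rankPartner f (γ ∘ σ) (σ ⁻¹' S) x) := by
  rw [rankPartner_eq_iff hf, isRankPair_equiv σ hσ, σ.apply_eq_iff_eq, σ.surjective.forall]
  simp only [isRankPair_equiv σ hσ]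
  exact (rankPartner_eq_iff hf).1 rfl

lemma exists_isRankPair_of_ncard_le (hf : f.Injective) {γ : α → Bool} {S : Set α}
    (hS : S.Finite) {x : α} (hx : x ∈ S)
    (hle : {a ∈ S | γ a = γ x}.ncard ≤ {a ∈ S | γ a = !γ x}.ncard) :
    ∃ y, IsRankPair f γ S x y := by
  have hlt : keyRank f {a ∈ S | γ a = γ x} x < {a ∈ S | γ a = !γ x}.ncard :=
    (keyRank_lt_ncard (A := {a ∈ S | γ a = γ x}) (hS.subset (Set.sep_subset _ _))
      ⟨hx, rfl⟩).trans_le hle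
  obtain ⟨y, ⟨hy, hcolor⟩, hrank⟩ :=
    exists_keyRank_eq hf (hS.subset (Set.sep_subset _ _)) hlt
  exact ⟨y, hS, hx, hy, hcolor, by rw [← hrank, hcolor]⟩

lemma color_eq_of_rankPartner_eq_self (hf : f.Injective) {γ : α → Bool} {S : Set α}
    (hS : S.Finite) {x y : α} (hx : x ∈ S) (hy : y ∈ S) (hxp : rankPartner f γ S x = x)
    (hyp : rankPartner f γ S y = y) : γ x = γ y := by
  by_contra hne
  have hcolor : γ y = !γ x := (Bool.not_eq.mpr hne).symm
  have unpaired {z : α} (hz : rankPartner f γ S z = z) : ¬ ∃ w, IsRankPair f γ S z w :=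
    fun ⟨w, hw⟩ => hw.ne ((hw.rankPartner_eq hf).symm.trans hz)
  rcases le_total {a ∈ S | γ a = γ x}.ncard {a ∈ S | γ a = γ y}.ncard with hle | hle
  · exact unpaired hxp (exists_isRankPair_of_ncard_le hf hS hx (hcolor ▸ hle))
  · exact unpaired hyp (exists_isRankPair_of_ncard_le hf hS hy (by simpa [hcolor] using hle))

variable [MeasurableSpace Ω] [Countable α]

lemma measurable_keyRank {A : Ω → Set α} (hA : Measurable A) (x : α) :
    Measurable fun ω => keyRank f (A ω) x := by
  refine measurable_ncard.comp (measurable_set_iff.2 fun a => ?_)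
  exact (measurable_set_iff.1 hA a).and measurable_const

lemma measurable_isRankPair {γ : Ω → α → Bool} {S : Ω → Set α} (hγ : Measurable γ)
    (hS : Measurable S) (x y : α) : Measurable fun ω => IsRankPair f (γ ω) (S ω) x y := by
  have hmem (a : α) : Measurable fun ω => a ∈ S ω := measurable_set_iff.1 hS a
  have hcolor (a : α) : Measurable fun ω => γ ω a := (measurable_pi_apply a).comp hγ
  have hclass (z : α) : Measurable fun ω => {a ∈ S ω | γ ω a = γ ω z} :=
    measurable_set_iff.2 fun a =>
      (hmem a).and (measurableSet_setOfPred.1 (measurableSet_eq_fun (hcolor a) (hcolor z)))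
  have hiff (ω : Ω) : IsRankPair f (γ ω) (S ω) x y ↔ (S ω).Finite ∧ x ∈ S ω ∧ y ∈ S ω ∧
      γ ω y = (!γ ω x) ∧ keyRank f {a ∈ S ω | γ ω a = γ ω x} x =
        keyRank f {a ∈ S ω | γ ω a = γ ω y} y :=
    ⟨fun ⟨h₁, h₂, h₃, h₄, h₅⟩ => ⟨h₁, h₂, h₃, h₄, h₅⟩,
      fun ⟨h₁, h₂, h₃, h₄, h₅⟩ => ⟨h₁, h₂, h₃, h₄, h₅⟩⟩
  simp only [hiff]
  refine (measurableSet_setOfPred.1 (hS MeasurableSet.setOfPred_finite)).and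
    ((hmem x).and ((hmem y).and (.and ?_ ?_)))
  · exact measurableSet_setOfPred.1 (measurableSet_eq_fun (hcolor y)
      ((measurable_from_top (f := Bool.not)).comp (hcolor x)))
  · exact measurableSet_setOfPred.1 (measurableSet_eq_fun (measurable_keyRank (hclass x) x)
      (measurable_keyRank (hclass y) y))

lemma measurable_rankPartner [MeasurableSpace α] (hf : f.Injective) {γ : Ω → α → Bool}
    {S : Ω → Set α} (hγ : Measurable γ) (hS : Measurable S) (x : α) :
    Measurable fun ω => rankPartner f (γ ω) (S ω) x := by
  refine measurable_to_countable' fun y => measurableSet_setOfPred.2 ?_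
  have hpair := measurable_isRankPair (f := f) hγ hS x
  simp only [Set.mem_singleton_iff, rankPartner_eq_iff hf]
  exact (hpair y).or (measurable_const.and (.forall fun z => (hpair z).not))

end RankMatching

section PartialMatching

variable {α : Type*} {γ : α → Bool} {φ : α → α}

/-- `φ` matches some elements with elements of the opposite colour; its fixed points are the
unmatched elements. -/
structure IsPartialMatching (γ : α → Bool) (φ : α → α) : Prop where
  involutive : φ.Involutive
  color_of_ne : ∀ {x}, φ x ≠ x → γ (φ x) = !γ x

lemma isPartialMatching_id (γ : α → Bool) : IsPartialMatching γ id :=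
  ⟨fun _ => rfl, fun h => absurd rfl h⟩

lemma IsPartialMatching.apply_ne (hφ : IsPartialMatching γ φ) {x : α} (hx : φ x ≠ x) :
    φ (φ x) ≠ φ x := by
  rw [hφ.involutive]
  exact hx.symm

lemma IsPartialMatching.isMatching {d : ℕ} {γ : Config d} {φ : Site d → Site d}
    (hφ : IsPartialMatching γ φ) (h : ∀ x, φ x ≠ x) : IsMatching γ φ :=
  ⟨hφ.involutive.bijective, hφ.involutive, fun x => hφ.color_of_ne (h x)⟩

/-- The `±1`-valued spin of a colour. -/
def spin (b : Bool) : ℝ := if b then 1 else -1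

lemma abs_spin (b : Bool) : |spin b| = 1 := by cases b <;> simp [spin]

lemma spin_not (b : Bool) : spin (!b) = -spin b := by cases b <;> simp [spin]

lemma IsPartialMatching.sum_spin_eq_sum_fixed [DecidableEq α] (hφ : IsPartialMatching γ φ)
    {L : Finset α} (hL : ∀ x ∈ L, φ x ∈ L) :
    ∑ x ∈ L, spin (γ x) = ∑ x ∈ L with φ x = x, spin (γ x) := by
  have hmatched : ∑ x ∈ L with φ x ≠ x, spin (γ x) = 0 := by
    refine Finset.sum_involution (fun x _ => φ x) (fun x hx => ?_)
      (fun x hx _ => (Finset.mem_filter.1 hx).2) (fun x hx => ?_) (fun x _ => hφ.involutive x)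
    · rw [hφ.color_of_ne (Finset.mem_filter.1 hx).2, spin_not, add_neg_cancel]
    · rw [Finset.mem_filter] at hx ⊢
      exact ⟨hL x hx.1, hφ.apply_ne hx.2⟩
  rw [← Finset.sum_filter_add_sum_filter_not L (fun x => φ x = x), hmatched, add_zero]

lemma IsPartialMatching.abs_sum_spin_eq_card_fixed [DecidableEq α] (hφ : IsPartialMatching γ φ)
    {L : Finset α} (hL : ∀ x ∈ L, φ x ∈ L)
    (hcolor : ∀ x ∈ L, ∀ y ∈ L, φ x = x → φ y = y → γ x = γ y) :
    |∑ x ∈ L, spin (γ x)| = ({x ∈ L | φ x = x} : Finset α).card := by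
  rw [hφ.sum_spin_eq_sum_fixed hL]
  rcases ({x ∈ L | φ x = x} : Finset α).eq_empty_or_nonempty with hempty | ⟨x, hx⟩
  · simp [hempty]
  · have hconst : ∀ y ∈ ({x ∈ L | φ x = x} : Finset α), spin (γ y) = spin (γ x) := by
      intro y hy
      rw [Finset.mem_filter] at hx hy
      rw [hcolor y hy.1 x hx.1 hy.2 hx.2]
    rw [Finset.sum_congr rfl hconst, Finset.sum_const, nsmul_eq_mul, abs_mul, abs_spin, mul_one,
      Nat.abs_cast]

end PartialMatching

section HierarchicalMatching

variable {α β Ω : Type*} [LinearOrder β] {f : α → β} {γ : α → Bool}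

/-- The elements of the class of `x` under `s` which `φ` leaves unmatched. -/
def unmatchedClass (s : Setoid α) (φ : α → α) (x : α) : Set α := {y | s x y ∧ φ y = y}

lemma unmatchedClass_congr {s : Setoid α} {φ : α → α} {x y : α} (h : s x y) :
    unmatchedClass s φ x = unmatchedClass s φ y := by
  ext z
  exact and_congr_left' ⟨s.trans' (s.symm' h), s.trans' h⟩

open Classical in
/-- The extension of the partial matching `φ` which matches, in each class of `s`, the elements
left unmatched by `φ` in increasing order. -/
def matchClasses (f : α → β) (γ : α → Bool) (s : Setoid α) (φ : α → α) (x : α) : α :=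
  if φ x = x then rankPartner f γ (unmatchedClass s φ x) x else φ x

section MatchClasses

variable {s : Setoid α} {φ : α → α} {x y : α}

lemma matchClasses_of_eq (h : φ x = x) :
    matchClasses f γ s φ x = rankPartner f γ (unmatchedClass s φ x) x := if_pos h

lemma matchClasses_of_ne (h : φ x ≠ x) : matchClasses f γ s φ x = φ x := if_neg h

lemma apply_eq_of_matchClasses_eq (h : matchClasses f γ s φ x = x) : φ x = x := by
  by_contra hne
  exact hne ((matchClasses_of_ne hne).symm.trans h)

lemma rel_matchClasses (h : φ x = x) : s x (matchClasses f γ s φ x) := by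
  rw [matchClasses_of_eq h]
  by_cases hx : rankPartner f γ (unmatchedClass s φ x) x = x
  · rw [hx]
  · exact (isRankPair_rankPartner hx).right_mem.1

lemma IsPartialMatching.matchClasses (hf : f.Injective) (hφ : IsPartialMatching γ φ) :
    IsPartialMatching γ (matchClasses f γ s φ) := by
  refine ⟨fun x => ?_, fun {x} hx => ?_⟩
  · by_cases h : φ x = x
    · rw [matchClasses_of_eq h]
      by_cases hfix : rankPartner f γ (unmatchedClass s φ x) x = x
      · rw [hfix, matchClasses_of_eq h, hfix]
      · have hpair := isRankPair_rankPartner hfix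
        rw [matchClasses_of_eq hpair.right_mem.2, ← unmatchedClass_congr hpair.right_mem.1]
        exact hpair.symm.rankPartner_eq hf
    · rw [matchClasses_of_ne h, matchClasses_of_ne (hφ.apply_ne h), hφ.involutive]
  · by_cases h : φ x = x
    · rw [matchClasses_of_eq h] at hx ⊢
      exact (isRankPair_rankPartner hx).color_right
    · rw [matchClasses_of_ne h]
      exact hφ.color_of_ne h

lemma color_eq_of_matchClasses_eq_self (hf : f.Injective) (hfin : {z | s x z}.Finite)
    (hxy : s x y) (hx : matchClasses f γ s φ x = x) (hy : matchClasses f γ s φ y = y) :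
    γ x = γ y := by
  have hφx := apply_eq_of_matchClasses_eq hx
  have hφy := apply_eq_of_matchClasses_eq hy
  rw [matchClasses_of_eq hφx] at hx
  rw [matchClasses_of_eq hφy, ← unmatchedClass_congr hxy] at hy
  have hfin' : (unmatchedClass s φ x).Finite := hfin.subset fun z hz => hz.1
  exact color_eq_of_rankPartner_eq_self hf hfin' ⟨s.refl' x, hφx⟩ ⟨hxy, hφy⟩ hx hy

lemma matchClasses_equiv (hf : f.Injective) (σ : α ≃ α)
    (hσ : ∀ a b, f (σ a) < f (σ b) ↔ f a < f b) {ψ : α → α} (hφ : ∀ x, φ (σ x) = σ (ψ x))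
    (x : α) :
    matchClasses f γ s φ (σ x) = σ (matchClasses f (γ ∘ σ) (s.comap σ) ψ x) := by
  by_cases h : ψ x = x
  · have hclass : σ ⁻¹' unmatchedClass s φ (σ x) = unmatchedClass (s.comap σ) ψ x := by
      ext y
      simp only [unmatchedClass, Set.preimage_ofPred_eq, Set.mem_ofPred_eq, hφ,
        σ.apply_eq_iff_eq, Setoid.comap_rel]
    rw [matchClasses_of_eq (by rw [hφ, h]), matchClasses_of_eq h, rankPartner_equiv hf σ hσ,
      hclass]
  · rw [matchClasses_of_ne (by simpa [hφ] using h), matchClasses_of_ne h, hφ]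

lemma measurable_matchClasses [MeasurableSpace Ω] [Countable α] [MeasurableSpace α]
    [MeasurableSingletonClass α] (hf : f.Injective) {γ : Ω → α → Bool} {s : Ω → Setoid α}
    {φ : Ω → α → α} (hγ : Measurable γ) (hs : ∀ x y, Measurable fun ω => s ω x y)
    (hφ : ∀ x, Measurable fun ω => φ ω x) (x : α) :
    Measurable fun ω => matchClasses f (γ ω) (s ω) (φ ω) x := by
  have hfixed (y : α) : MeasurableSet {ω | φ ω y = y} := hφ y (measurableSet_singleton y)
  have hclass : Measurable fun ω => unmatchedClass (s ω) (φ ω) x :=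
    measurable_set_iff.2 fun y => (hs x y).and (measurableSet_setOfPred.1 (hfixed y))
  exact Measurable.ite (hfixed x) (measurable_rankPartner hf hγ hclass x) (hφ x)

end MatchClasses

/-- The partial matching obtained by matching successively, at the levels `0, …, k - 1`, the still
unmatched elements of each class of the partition `r j` in increasing order. -/
def levelMatching (f : α → β) (γ : α → Bool) (r : ℕ → Setoid α) : ℕ → α → α
  | 0 => id
  | k + 1 => matchClasses f γ (r k) (levelMatching f γ r k)

variable {r : ℕ → Setoid α} {k : ℕ} {x : α}

lemma isPartialMatching_levelMatching (hf : f.Injective) (γ : α → Bool) (r : ℕ → Setoid α) :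
    ∀ k, IsPartialMatching γ (levelMatching f γ r k)
  | 0 => isPartialMatching_id γ
  | k + 1 => (isPartialMatching_levelMatching hf γ r k).matchClasses hf

lemma levelMatching_eq_of_le {j : ℕ} (hkj : k ≤ j) (hx : levelMatching f γ r k x ≠ x) :
    levelMatching f γ r j x = levelMatching f γ r k x := by
  induction j, hkj using Nat.le_induction with
  | base => rfl
  | succ j _ ih => rw [levelMatching, matchClasses_of_ne (by rwa [ih]), ih]

lemma rel_levelMatching_succ (hr : Monotone r) (k : ℕ) (x : α) :
    r k x (levelMatching f γ r (k + 1) x) := by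
  induction k with
  | zero => exact rel_matchClasses rfl
  | succ k ih =>
    by_cases hx : levelMatching f γ r (k + 1) x = x
    · exact rel_matchClasses hx
    · rw [levelMatching, matchClasses_of_ne hx]
      exact hr k.le_succ ih

open Classical in
lemma card_unmatched_levelMatching_succ (hf : f.Injective) (hr : Monotone r)
    {L : Finset α} (hL : ∀ y, y ∈ L ↔ r k x y) :
    (({y ∈ L | levelMatching f γ r (k + 1) y = y} : Finset α).card : ℝ) =
      |∑ y ∈ L, spin (γ y)| := by
  refine ((isPartialMatching_levelMatching hf γ r (k + 1)).abs_sum_spin_eq_card_fixed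
    (fun y hy => ?_) fun y hy z hz hfy hfz => ?_).symm
  · exact (hL _).2 ((r k).trans' ((hL y).1 hy) (rel_levelMatching_succ hr k y))
  · have hxy := (hL y).1 hy
    have hfin : {w | r k y w}.Finite :=
      L.finite_toSet.subset fun w hw => (hL w).2 ((r k).trans' hxy hw)
    exact color_eq_of_matchClasses_eq_self hf hfin
      ((r k).trans' ((r k).symm' hxy) ((hL z).1 hz)) hfy hfz

lemma levelMatching_equiv (hf : f.Injective) (σ : α ≃ α)
    (hσ : ∀ a b, f (σ a) < f (σ b) ↔ f a < f b) (k : ℕ) (x : α) :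
    levelMatching f γ r k (σ x) =
      σ (levelMatching f (γ ∘ σ) (fun j => (r j).comap σ) k x) := by
  induction k generalizing x with
  | zero => rfl
  | succ k ih => exact matchClasses_equiv hf σ hσ ih x

lemma measurable_levelMatching [MeasurableSpace Ω] [Countable α] [MeasurableSpace α]
    [MeasurableSingletonClass α] (hf : f.Injective) {γ : Ω → α → Bool} {r : Ω → ℕ → Setoid α}
    (hγ : Measurable γ) (hr : ∀ k x y, Measurable fun ω => r ω k x y) (k : ℕ) (x : α) :
    Measurable fun ω => levelMatching f (γ ω) (r ω) k x := by
  induction k generalizing x with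
  | zero => exact measurable_const
  | succ k ih => exact measurable_matchClasses hf hγ (hr k) ih x

lemma exists_eventually_levelMatching_eq (f : α → β) (γ : α → Bool) (r : ℕ → Setoid α) (x : α) :
    ∃ y, ∀ᶠ k in Filter.atTop, levelMatching f γ r k x = y := by
  by_cases h : ∃ k, levelMatching f γ r k x ≠ x
  · obtain ⟨k, hk⟩ := h
    exact ⟨_, Filter.eventually_atTop.2 ⟨k, fun j hj => levelMatching_eq_of_le hj hk⟩⟩
  · push Not at h
    exact ⟨x, .of_forall h⟩

/-- The limit of the partial matchings `levelMatching f γ r k` as `k → ∞`. -/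
def limitMatching (f : α → β) (γ : α → Bool) (r : ℕ → Setoid α) (x : α) : α :=
  (exists_eventually_levelMatching_eq f γ r x).choose

lemma eventually_levelMatching_eq (f : α → β) (γ : α → Bool) (r : ℕ → Setoid α) (x : α) :
    ∀ᶠ k in Filter.atTop, levelMatching f γ r k x = limitMatching f γ r x :=
  (exists_eventually_levelMatching_eq f γ r x).choose_spec

lemma limitMatching_eq_iff {y : α} : limitMatching f γ r x = y ↔
    ∃ K, ∀ k, K ≤ k → levelMatching f γ r k x = y := by
  refine ⟨?_, fun ⟨K, hK⟩ => ?_⟩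
  · rintro rfl
    exact Filter.eventually_atTop.1 (eventually_levelMatching_eq f γ r x)
  · obtain ⟨k, hk, hkK⟩ := ((eventually_levelMatching_eq f γ r x).and
      (Filter.eventually_ge_atTop K)).exists
    exact hk.symm.trans (hK k hkK)

lemma limitMatching_eq_levelMatching (hx : levelMatching f γ r k x ≠ x) :
    limitMatching f γ r x = levelMatching f γ r k x :=
  limitMatching_eq_iff.2 ⟨k, fun _ hj => levelMatching_eq_of_le hj hx⟩

lemma isPartialMatching_limitMatching (hf : f.Injective) (γ : α → Bool) (r : ℕ → Setoid α) :
    IsPartialMatching γ (limitMatching f γ r) := by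
  refine ⟨fun x => ?_, fun {x} hx => ?_⟩
  · obtain ⟨k, hk, hk'⟩ := ((eventually_levelMatching_eq f γ r x).and
      (eventually_levelMatching_eq f γ r (limitMatching f γ r x))).exists
    rw [← hk', ← hk, (isPartialMatching_levelMatching hf γ r k).involutive]
  · obtain ⟨k, hk⟩ := (eventually_levelMatching_eq f γ r x).exists
    rw [← hk] at hx ⊢
    exact (isPartialMatching_levelMatching hf γ r k).color_of_ne hx

lemma rel_limitMatching (hr : Monotone r) (hx : levelMatching f γ r (k + 1) x ≠ x) :
    r k x (limitMatching f γ r x) := by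
  rw [limitMatching_eq_levelMatching hx]
  exact rel_levelMatching_succ hr k x

lemma limitMatching_equiv (hf : f.Injective) (σ : α ≃ α)
    (hσ : ∀ a b, f (σ a) < f (σ b) ↔ f a < f b) (x : α) :
    limitMatching f γ r (σ x) =
      σ (limitMatching f (γ ∘ σ) (fun j => (r j).comap σ) x) := by
  obtain ⟨k, hk, hk'⟩ := ((eventually_levelMatching_eq f γ r (σ x)).and
    (eventually_levelMatching_eq f (γ ∘ σ) (fun j => (r j).comap σ) x)).exists
  rw [← hk, ← hk', levelMatching_equiv hf σ hσ]

lemma measurable_limitMatching [MeasurableSpace Ω] [Countable α] [MeasurableSpace α]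
    [MeasurableSingletonClass α] (hf : f.Injective) {γ : Ω → α → Bool} {r : Ω → ℕ → Setoid α}
    (hγ : Measurable γ) (hr : ∀ k x y, Measurable fun ω => r ω k x y) (x : α) :
    Measurable fun ω => limitMatching f (γ ω) (r ω) x := by
  have hlevel (k : ℕ) (y : α) : Measurable fun ω => levelMatching f (γ ω) (r ω) k x = y :=
    measurableSet_setOfPred.1
      (measurable_levelMatching hf hγ hr k x (measurableSet_singleton y))
  refine measurable_to_countable' fun y => measurableSet_setOfPred.2 ?_
  simp only [Set.mem_singleton_iff, limitMatching_eq_iff]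
  exact .exists fun K => .forall fun k => measurable_const.imp (hlevel k y)

end HierarchicalMatching

section BernoulliProduct

variable {d : ℕ} {P : Measure (Config d)}

/-- The law of a fair coin. -/
def fairCoin : Measure Bool := (PMF.uniformOfFintype Bool).toMeasure

instance isProbabilityMeasure_fairCoin : IsProbabilityMeasure fairCoin :=
  PMF.toMeasure.isProbabilityMeasure _

lemma fairCoin_singleton (b : Bool) : fairCoin {b} = 1 / 2 := by
  simp [fairCoin]

lemma measurableSet_cylinder (s : Finset (Site d)) (g : Site d → Bool) :
    MeasurableSet {γ : Config d | ∀ x ∈ s, γ x = g x} :=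
  measurableSet_setOfPred.2 <| .forall fun x => measurable_const.imp <|
    measurableSet_setOfPred.1 (measurableSet_eq_fun (measurable_pi_apply x) measurable_const)

lemma isBernoulliHalfProduct_iff : IsBernoulliHalfProduct P ↔
    P = Measure.infinitePi fun _ => fairCoin := by
  constructor
  · rintro ⟨_, hP⟩
    refine IsProjectiveLimit.unique (P := fun s => Measure.pi fun _ : s => fairCoin)
      (fun s => ?_) (Measure.isProjectiveLimit_infinitePi _)
    refine Measure.ext_of_singleton fun b => ?_
    classical
    let g : Site d → Bool := fun x => if h : x ∈ s then b ⟨x, h⟩ else false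
    have hpre : s.restrict ⁻¹' ({b} : Set (s → Bool)) = {γ : Config d | ∀ x ∈ s, γ x = g x} := by
      ext γ
      simp +contextual [g, funext_iff]
    rw [Measure.map_apply (Finset.measurable_restrict s) (measurableSet_singleton b), hpre, hP,
      Measure.pi_singleton]
    simp [fairCoin_singleton]
  · rintro rfl
    refine ⟨inferInstance, fun s g => ?_⟩
    have hset : {γ : Config d | ∀ x ∈ s, γ x = g x} = Set.pi s fun x => {g x} := by
      ext γ
      simp [Set.mem_pi]
    rw [hset, Measure.infinitePi_pi _ fun _ _ => measurableSet_singleton _]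
    simp [fairCoin_singleton]

lemma shiftCfg_add (z : Site d) (γ : Config d) (x : Site d) :
    shiftCfg z γ (x + z) = γ x := by
  simp [shiftCfg]

lemma measurable_shiftCfg (z : Site d) : Measurable (shiftCfg z : Config d → Config d) :=
  measurable_pi_lambda _ fun x => measurable_pi_apply (x - z)

lemma IsBernoulliHalfProduct.map_shiftCfg (hP : IsBernoulliHalfProduct P) (z : Site d) :
    IsBernoulliHalfProduct (P.map (shiftCfg z)) := by
  have := hP.1
  refine ⟨Measure.isProbabilityMeasure_map (measurable_shiftCfg z).aemeasurable, fun s g => ?_⟩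
  have hpre : shiftCfg z ⁻¹' {γ : Config d | ∀ x ∈ s, γ x = g x} =
      {γ | ∀ x ∈ s.map (Equiv.subRight z).toEmbedding, γ x = g (x + z)} := by
    ext γ
    simp only [shiftCfg, Set.mem_preimage, Set.mem_ofPred_eq, Finset.mem_map_equiv,
      Equiv.subRight_symm_apply]
    rw [(Equiv.subRight z).forall_congr_left]
    simp
  rw [Measure.map_apply (measurable_shiftCfg z) (measurableSet_cylinder s g), hpre]
  exact (hP.2 _ fun x => g (x + z)).trans (by rw [Finset.card_map])

lemma IsBernoulliHalfProduct.measurePreserving_shiftCfg (hP : IsBernoulliHalfProduct P)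
    (z : Site d) : MeasurePreserving (shiftCfg z) P P :=
  ⟨measurable_shiftCfg z, (isBernoulliHalfProduct_iff.1 (hP.map_shiftCfg z)).trans
    (isBernoulliHalfProduct_iff.1 hP).symm⟩

lemma IsBernoulliHalfProduct.map_eval (hP : IsBernoulliHalfProduct P) (x : Site d) :
    P.map (fun γ => γ x) = fairCoin := by
  rw [isBernoulliHalfProduct_iff.1 hP]
  exact Measure.infinitePi_map_eval _ x

lemma IsBernoulliHalfProduct.iIndepFun_eval (hP : IsBernoulliHalfProduct P) :
    ProbabilityTheory.iIndepFun (fun (x : Site d) (γ : Config d) => γ x) P := by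
  rw [isBernoulliHalfProduct_iff.1 hP]
  exact ProbabilityTheory.iIndepFun_infinitePi (X := fun _ b => b) fun _ => measurable_id

lemma measurable_spin : Measurable spin := measurable_of_countable _

lemma measurable_spin_eval (x : Site d) : Measurable fun γ : Config d => spin (γ x) :=
  measurable_spin.comp (measurable_pi_apply x)

lemma integral_spin_fairCoin : ∫ b, spin b ∂fairCoin = 0 := by
  rw [integral_fintype .of_finite]
  simp [spin, measureReal_def, fairCoin_singleton]

lemma IsBernoulliHalfProduct.integral_spin (hP : IsBernoulliHalfProduct P) (x : Site d) :
    ∫ γ, spin (γ x) ∂P = 0 := by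
  rw [← integral_spin_fairCoin, ← hP.map_eval x,
    integral_map (measurable_pi_apply x).aemeasurable measurable_spin.aestronglyMeasurable]

lemma IsBernoulliHalfProduct.memLp_spin (hP : IsBernoulliHalfProduct P) (x : Site d) :
    MemLp (fun γ => spin (γ x)) 2 P := by
  have := hP.1
  exact .of_bound (measurable_spin_eval x).aestronglyMeasurable 1
    (.of_forall fun γ => (abs_spin _).le)

lemma IsBernoulliHalfProduct.variance_spin (hP : IsBernoulliHalfProduct P) (x : Site d) :
    ProbabilityTheory.variance (fun γ => spin (γ x)) P = 1 := by
  have := hP.1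
  rw [ProbabilityTheory.variance_of_integral_eq_zero (measurable_spin_eval x).aemeasurable
    (hP.integral_spin x)]
  simp [← sq_abs (spin _), abs_spin]

end BernoulliProduct

section FirstMoment

open ProbabilityTheory

variable {Ω : Type*} [MeasurableSpace Ω] {μ : Measure Ω} [IsProbabilityMeasure μ]

lemma integral_abs_le_sqrt_variance {X : Ω → ℝ} (hX : MemLp X 2 μ) (hmean : ∫ ω, X ω ∂μ = 0) :
    ∫ ω, |X ω| ∂μ ≤ √(variance X μ) := by
  have hvar : variance X μ - (∫ ω, |X ω| ∂μ) ^ 2 = variance (fun ω => |X ω|) μ := by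
    rw [variance_eq_sub (X := fun ω => |X ω|) hX.abs,
      variance_of_integral_eq_zero hX.aemeasurable hmean]
    simp
  exact Real.le_sqrt_of_sq_le (sub_nonneg.1 (hvar ▸ variance_nonneg _ _))

lemma integral_abs_sum_le_sqrt_sum_variance {ι : Type*} {X : ι → Ω → ℝ} {s : Finset ι}
    (hX : ∀ i ∈ s, MemLp (X i) 2 μ) (hmean : ∀ i ∈ s, ∫ ω, X i ω ∂μ = 0)
    (hindep : Set.Pairwise s fun i j => IndepFun (X i) (X j) μ) :
    ∫ ω, |∑ i ∈ s, X i ω| ∂μ ≤ √(∑ i ∈ s, variance (X i) μ) := by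
  rw [← IndepFun.variance_sum hX hindep, Finset.sum_fn]
  refine integral_abs_le_sqrt_variance (memLp_finsetSum _ hX) ?_
  rw [integral_finsetSum _ fun i hi => (hX i hi).integrable one_le_two]
  exact Finset.sum_eq_zero hmean

lemma IsBernoulliHalfProduct.lintegral_abs_mean_spin_le {d : ℕ} {P : Measure (Config d)}
    (hP : IsBernoulliHalfProduct P) (B : Finset (Site d)) :
    ∫⁻ γ, ENNReal.ofReal (|∑ b ∈ B, spin (γ b)| / B.card) ∂P ≤
      ENNReal.ofReal (√B.card)⁻¹ := by
  have := hP.1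
  have hindep : Set.Pairwise (B : Set (Site d)) fun x y =>
      IndepFun (fun γ : Config d => spin (γ x)) (fun γ => spin (γ y)) P :=
    fun x _ y _ hxy => (hP.iIndepFun_eval.indepFun hxy).comp measurable_spin measurable_spin
  have hmoment := integral_abs_sum_le_sqrt_sum_variance (fun x (_ : x ∈ B) => hP.memLp_spin x)
    (fun x _ => hP.integral_spin x) hindep
  simp only [hP.variance_spin, Finset.sum_const, nsmul_eq_mul, mul_one] at hmoment
  have hint : Integrable (fun γ : Config d => |∑ b ∈ B, spin (γ b)| / B.card) P :=
    ((integrable_finsetSum B fun b _ =>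
      (hP.memLp_spin b).integrable one_le_two).abs).div_const _
  rw [← ofReal_integral_eq_lintegral_ofReal hint (.of_forall fun γ => by positivity),
    integral_div]
  refine ENNReal.ofReal_le_ofReal ?_
  calc (∫ γ, |∑ b ∈ B, spin (γ b)| ∂P) / B.card
      ≤ √B.card / B.card := by gcongr
    _ = (√B.card)⁻¹ := by rw [Real.sqrt_div_self', one_div]

end FirstMoment

section MassTransport

variable {α G Ω : Type*} [AddGroup G] {τ : G → Ω → Ω}

open Classical in
/-- The mass received by `x` from `y` when every point `y` spreads the mass `h y` evenly over its
class under `s`, assumed finite. -/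
def sharedMass (s : Setoid α) (h : α → ℝ≥0∞) (x y : α) : ℝ≥0∞ :=
  if s x y then h y / {w | s y w}.ncard else 0

lemma ncard_class_eq_card {s : Setoid α} {x y : α} {L : Finset α}
    (hL : ∀ w, w ∈ L ↔ s x w) (hxy : s x y) : {w | s y w}.ncard = L.card := by
  rw [← Set.ncard_coe_finset]
  congr 1
  ext w
  simp only [Set.mem_ofPred_eq, Finset.mem_coe, hL]
  exact ⟨s.trans' hxy, s.trans' (s.symm' hxy)⟩

lemma tsum_sharedMass_right {s : Setoid α} {x : α} {L : Finset α}
    (hL : ∀ y, y ∈ L ↔ s x y) (h : α → ℝ≥0∞) :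
    ∑' y, sharedMass s h x y = (∑ y ∈ L, h y) / L.card := by
  have hout (y : α) (hy : y ∉ L) : sharedMass s h x y = 0 := if_neg (mt (hL y).2 hy)
  rw [tsum_eq_sum hout, div_eq_mul_inv, Finset.sum_mul]
  refine Finset.sum_congr rfl fun y hy => ?_
  have hxy := (hL y).1 hy
  rw [sharedMass, if_pos hxy, ncard_class_eq_card hL hxy, div_eq_mul_inv]

lemma tsum_sharedMass_left {s : Setoid α} {x : α} {L : Finset α}
    (hL : ∀ y, y ∈ L ↔ s x y) (h : α → ℝ≥0∞) : ∑' y, sharedMass s h y x = h x := by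
  have hmem (y : α) : y ∈ L ↔ s y x := (hL y).trans s.comm'
  have hpos : L.card ≠ 0 := Finset.card_ne_zero_of_mem ((hL x).2 (s.refl' x))
  have hout (y : α) (hy : y ∉ L) : sharedMass s h y x = 0 := if_neg (mt (hmem y).2 hy)
  have hin (y : α) (hy : y ∈ L) : sharedMass s h y x = h x / {w | s x w}.ncard :=
    if_pos ((hmem y).1 hy)
  rw [tsum_eq_sum hout, Finset.sum_congr rfl hin, ncard_class_eq_card hL (s.refl' x),
    Finset.sum_const, nsmul_eq_mul,
    ENNReal.mul_div_cancel (by exact_mod_cast hpos) (ENNReal.natCast_ne_top _)]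

lemma measurable_sharedMass [MeasurableSpace Ω] [Countable α] {s : Ω → Setoid α}
    (hs : ∀ x y, Measurable fun ω => s ω x y) {h : Ω → α → ℝ≥0∞}
    (hh : ∀ x, Measurable fun ω => h ω x) (x y : α) :
    Measurable fun ω => sharedMass (s ω) (h ω) x y := by
  have hncard : Measurable fun ω => {w | s ω y w}.ncard :=
    measurable_ncard.comp (measurable_set_iff.2 (hs y))
  exact Measurable.ite (measurableSet_setOfPred.2 (hs x y))
    ((hh y).div (measurable_from_top.comp hncard)) measurable_const

lemma sharedMass_add {s : Ω → Setoid G}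
    (hs : ∀ ω x y z, s (τ z ω) (x + z) (y + z) ↔ s ω x y)
    {h : Ω → G → ℝ≥0∞} (hh : ∀ ω x z, h (τ z ω) (x + z) = h ω x) (ω : Ω) (x y z : G) :
    sharedMass (s (τ z ω)) (h (τ z ω)) (x + z) (y + z) = sharedMass (s ω) (h ω) x y := by
  have hclass : {w | s (τ z ω) (y + z) w} = (· + z) '' {w | s ω y w} := by
    ext w
    simp only [Set.mem_ofPred_eq, Set.image_add_right, Set.mem_preimage]
    rw [← hs ω y (w + -z) z, neg_add_cancel_right]
  rw [sharedMass, sharedMass, hh, hclass, Set.ncard_image_of_injective _ (add_left_injective z)]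
  classical exact if_congr (hs ω x y z) rfl rfl

variable [Countable G] [MeasurableSpace Ω] {μ : Measure Ω}

theorem lintegral_mass_transport (hτ : ∀ z, MeasurePreserving (τ z) μ μ)
    {T : Ω → G → G → ℝ≥0∞} (hT : ∀ x y, Measurable fun ω => T ω x y)
    (hinv : ∀ ω x y z, T (τ z ω) (x + z) (y + z) = T ω x y) :
    ∫⁻ ω, ∑' y, T ω 0 y ∂μ = ∫⁻ ω, ∑' y, T ω y 0 ∂μ := by
  have hshift (y : G) : ∫⁻ ω, T ω 0 y ∂μ = ∫⁻ ω, T ω (-y) 0 ∂μ := by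
    rw [← (hτ (-y)).lintegral_comp (hT (-y) 0)]
    refine lintegral_congr fun ω => ?_
    rw [← hinv ω 0 y (-y), zero_add, add_neg_cancel]
  calc ∫⁻ ω, ∑' y, T ω 0 y ∂μ
      = ∑' y, ∫⁻ ω, T ω 0 y ∂μ := lintegral_tsum fun y => (hT 0 y).aemeasurable
    _ = ∑' y, ∫⁻ ω, T ω (-y) 0 ∂μ := tsum_congr hshift
    _ = ∑' y, ∫⁻ ω, T ω y 0 ∂μ := (Equiv.neg G).tsum_eq fun y => ∫⁻ ω, T ω y 0 ∂μ
    _ = ∫⁻ ω, ∑' y, T ω y 0 ∂μ := (lintegral_tsum fun y => (hT y 0).aemeasurable).symm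

variable {s : Ω → Setoid G}

lemma lintegral_tsum_sharedMass (hτ : ∀ z, MeasurePreserving (τ z) μ μ)
    (hs : ∀ x y, Measurable fun ω => s ω x y)
    (hsτ : ∀ ω x y z, s (τ z ω) (x + z) (y + z) ↔ s ω x y)
    (hfin : ∀ᵐ ω ∂μ, {y | s ω 0 y}.Finite) {h : Ω → G → ℝ≥0∞}
    (hh : ∀ x, Measurable fun ω => h ω x) (hhτ : ∀ ω x z, h (τ z ω) (x + z) = h ω x) :
    ∫⁻ ω, ∑' y, sharedMass (s ω) (h ω) 0 y ∂μ = ∫⁻ ω, h ω 0 ∂μ := by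
  rw [lintegral_mass_transport hτ (measurable_sharedMass hs hh) (sharedMass_add hsτ hhτ)]
  refine lintegral_congr_ae ?_
  filter_upwards [hfin] with ω hω
  exact tsum_sharedMass_left (L := hω.toFinset) (by simp) (h ω)

theorem lintegral_le_of_sum_class_le (hτ : ∀ z, MeasurePreserving (τ z) μ μ)
    (hs : ∀ x y, Measurable fun ω => s ω x y)
    (hsτ : ∀ ω x y z, s (τ z ω) (x + z) (y + z) ↔ s ω x y)
    (hfin : ∀ᵐ ω ∂μ, {y | s ω 0 y}.Finite) {g h : Ω → G → ℝ≥0∞}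
    (hg : ∀ x, Measurable fun ω => g ω x) (hgτ : ∀ ω x z, g (τ z ω) (x + z) = g ω x)
    (hh : ∀ x, Measurable fun ω => h ω x) (hhτ : ∀ ω x z, h (τ z ω) (x + z) = h ω x)
    (hle : ∀ ω (L : Finset G), (∀ y, y ∈ L ↔ s ω 0 y) → ∑ y ∈ L, g ω y ≤ ∑ y ∈ L, h ω y) :
    ∫⁻ ω, g ω 0 ∂μ ≤ ∫⁻ ω, h ω 0 ∂μ := by
  rw [← lintegral_tsum_sharedMass hτ hs hsτ hfin hg hgτ,
    ← lintegral_tsum_sharedMass hτ hs hsτ hfin hh hhτ]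
  refine lintegral_mono_ae ?_
  filter_upwards [hfin] with ω hω
  have hL (y : G) : y ∈ hω.toFinset ↔ s ω 0 y := by simp
  rw [tsum_sharedMass_right hL, tsum_sharedMass_right hL]
  exact ENNReal.div_le_div_right (hle ω _ hL) _

end MassTransport

section LatticeSums

variable {G : Type*} [AddGroup G] {L D B : Finset G} {σ : G → ℝ}

lemma abs_sum_le_card {ι : Type*} (S : Finset ι) {σ : ι → ℝ} (hσ : ∀ x, |σ x| ≤ 1) :
    |∑ x ∈ S, σ x| ≤ S.card := by
  simpa using Finset.abs_sum_le_sum_abs σ S |>.trans (Finset.sum_le_sum fun x _ => hσ x)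

lemma abs_sum_sub_sum_add_le (hσ : ∀ x, |σ x| ≤ 1) {b : G}
    (hD : ∀ x ∈ L, x ∉ D → x + b ∈ L ∧ x - b ∈ L) :
    |∑ x ∈ L, σ x - ∑ x ∈ L, σ (x + b)| ≤ 2 * D.card := by
  classical
  have himage : ∑ x ∈ L, σ (x + b) = ∑ x ∈ L.image (· + b), σ x :=
    (Finset.sum_image (add_left_injective b).injOn).symm
  have hleft : ((L \ L.image (· + b)).card : ℝ) ≤ D.card := by
    norm_cast
    refine Finset.card_le_card fun x hx => ?_
    rw [Finset.mem_sdiff] at hx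
    by_contra hxD
    exact hx.2 (Finset.mem_image.2 ⟨x - b, (hD x hx.1 hxD).2, sub_add_cancel x b⟩)
  have hright : ((L.image (· + b) \ L).card : ℝ) ≤ D.card := by
    norm_cast
    refine (Finset.card_le_card (t := D.image (· + b)) fun y hy => ?_).trans Finset.card_image_le
    obtain ⟨hyL, hy⟩ := Finset.mem_sdiff.1 hy
    obtain ⟨x, hx, rfl⟩ := Finset.mem_image.1 hyL
    by_contra hxD
    exact hy (hD x hx fun h => hxD (Finset.mem_image_of_mem _ h)).1
  rw [himage, ← Finset.sum_sdiff_sub_sum_sdiff]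
  linarith [abs_sub (∑ x ∈ L \ L.image (· + b), σ x) (∑ x ∈ L.image (· + b) \ L, σ x),
    abs_sum_le_card (L \ L.image (· + b)) hσ, abs_sum_le_card (L.image (· + b) \ L) hσ]

lemma abs_sum_le_sum_abs_mean_add (hσ : ∀ x, |σ x| ≤ 1) (hB : B.Nonempty)
    (hD : ∀ x ∈ L, x ∉ D → ∀ b ∈ B, x + b ∈ L ∧ x - b ∈ L) :
    |∑ x ∈ L, σ x| ≤ ∑ x ∈ L, |∑ b ∈ B, σ (x + b)| / B.card + 2 * D.card := by
  have hcard : (0 : ℝ) < B.card := by exact_mod_cast hB.card_pos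
  have hsplit : B.card * ∑ x ∈ L, σ x =
      ∑ x ∈ L, ∑ b ∈ B, σ (x + b) + ∑ b ∈ B, (∑ x ∈ L, σ x - ∑ x ∈ L, σ (x + b)) := by
    rw [Finset.sum_sub_distrib, Finset.sum_comm, Finset.sum_const, nsmul_eq_mul]
    ring
  have herror : |∑ b ∈ B, (∑ x ∈ L, σ x - ∑ x ∈ L, σ (x + b))| ≤ B.card * (2 * D.card) := by
    refine (Finset.abs_sum_le_sum_abs _ _).trans ?_
    rw [← nsmul_eq_mul]
    exact Finset.sum_le_card_nsmul _ _ _ fun b hb =>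
      abs_sum_sub_sum_add_le hσ fun x hx hxD => hD x hx hxD b hb
  rw [← Finset.sum_div, ← sub_le_iff_le_add, le_div_iff₀ hcard, sub_mul, sub_le_iff_le_add,
    mul_comm, mul_comm (2 * (D.card : ℝ))]
  calc B.card * |∑ x ∈ L, σ x|
      = |∑ x ∈ L, ∑ b ∈ B, σ (x + b) + ∑ b ∈ B, (∑ x ∈ L, σ x - ∑ x ∈ L, σ (x + b))| := by
        rw [← hsplit, abs_mul, Nat.abs_cast]
    _ ≤ ∑ x ∈ L, |∑ b ∈ B, σ (x + b)| + B.card * (2 * D.card) :=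
        (abs_add_le _ _).trans (add_le_add (Finset.abs_sum_le_sum_abs _ _) herror)

end LatticeSums

section RandomSets

variable {α Ω : Type*} [MeasurableSpace Ω] {S : Ω → Set α} {x : α}

lemma measurable_indicator_one_apply (hS : Measurable fun ω => x ∈ S ω) :
    Measurable fun ω => (S ω).indicator (1 : α → ℝ≥0∞) x :=
  measurable_one.indicator (measurableSet_setOfPred.2 hS)

lemma lintegral_indicator_one_apply {μ : Measure Ω} (hS : Measurable fun ω => x ∈ S ω) :
    ∫⁻ ω, (S ω).indicator (1 : α → ℝ≥0∞) x ∂μ = μ {ω | x ∈ S ω} :=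
  lintegral_indicator_one (measurableSet_setOfPred.2 hS)

lemma indicator_one_congr {S T : Set α} {y : α} (h : x ∈ S ↔ y ∈ T) :
    S.indicator (1 : α → ℝ≥0∞) x = T.indicator 1 y := by
  classical simp only [Set.indicator_apply, h, Pi.one_apply]

end RandomSets

section CellHierarchy

variable {d : ℕ} {P : Measure (Config d)}

/-- The absolute value of the mean spin of `γ` over the translate `x + B`. -/
def absMeanSpin (B : Finset (Site d)) (γ : Config d) (x : Site d) : ℝ :=
  |∑ b ∈ B, spin (γ (x + b))| / B.card

lemma absMeanSpin_nonneg (B : Finset (Site d)) (γ : Config d) (x : Site d) :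
    0 ≤ absMeanSpin B γ x := by
  unfold absMeanSpin
  positivity

lemma measurable_absMeanSpin (B : Finset (Site d)) (x : Site d) :
    Measurable fun γ => absMeanSpin B γ x :=
  (Finset.measurable_sum B fun b _ => measurable_spin_eval (x + b)).abs.div_const _

lemma absMeanSpin_shiftCfg (B : Finset (Site d)) (γ : Config d) (x z : Site d) :
    absMeanSpin B (shiftCfg z γ) (x + z) = absMeanSpin B γ x := by
  simp only [absMeanSpin, add_right_comm x z, shiftCfg_add]

/-- An increasing sequence of random partitions of the lattice into cells, depending measurably
and translation-equivariantly on the configuration. -/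
structure CellHierarchy (d : ℕ) where
  cell : Config d → ℕ → Setoid (Site d)
  monotone_cell : ∀ γ, Monotone (cell γ)
  measurable_cell : ∀ k x y, Measurable fun γ => cell γ k x y
  cell_shiftCfg : ∀ γ k x y z, cell (shiftCfg z γ) k (x + z) (y + z) ↔ cell γ k x y

lemma toLex_add_lt_toLex_add_iff (z a b : Site d) :
    toLex (a + z) < toLex (b + z) ↔ toLex a < toLex b := by
  rw [toLex_add, toLex_add, add_lt_add_iff_right]

namespace CellHierarchy

variable (H : CellHierarchy d)

/-- The partial matching rule which matches as many sites as possible inside the cells of the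
levels `0, …, k - 1`, successively, with ties broken by the lexicographic order. -/
def levelRule (k : ℕ) (γ : Config d) : Site d → Site d :=
  levelMatching toLex γ (H.cell γ) k

/-- The limit of the partial matching rules `H.levelRule k` as `k → ∞`. -/
def rule (γ : Config d) : Site d → Site d := limitMatching toLex γ (H.cell γ)

/-- The sites left unmatched by `H.levelRule k`. -/
def unmatched (k : ℕ) (γ : Config d) : Set (Site d) := {x | H.levelRule k γ x = x}

/-- The sites `x` such that some translate `x + b`, `b ∈ B`, is not in the cell of level `k`
containing `x`. -/
def boundary (k : ℕ) (B : Finset (Site d)) (γ : Config d) : Set (Site d) :=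
  {x | ∃ b ∈ B, ¬ H.cell γ k x (x + b)}

lemma comap_cell_shiftCfg (z : Site d) (γ : Config d) :
    (fun k => (H.cell (shiftCfg z γ) k).comap (Equiv.addRight z)) = H.cell γ :=
  funext fun k => Setoid.ext fun x y => H.cell_shiftCfg γ k x y z

lemma shiftCfg_comp_addRight (z : Site d) (γ : Config d) :
    shiftCfg z γ ∘ Equiv.addRight z = γ :=
  funext fun x => shiftCfg_add z γ x

lemma levelRule_shiftCfg (k : ℕ) (z : Site d) (γ : Config d) (x : Site d) :
    H.levelRule k (shiftCfg z γ) (x + z) = H.levelRule k γ x + z := by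
  have h := levelMatching_equiv toLex.injective (γ := shiftCfg z γ) (r := H.cell (shiftCfg z γ))
    (Equiv.addRight z) (toLex_add_lt_toLex_add_iff z) k x
  rwa [shiftCfg_comp_addRight, comap_cell_shiftCfg] at h

lemma rule_shiftCfg (z : Site d) (γ : Config d) (x : Site d) :
    H.rule (shiftCfg z γ) (x + z) = H.rule γ x + z := by
  have h := limitMatching_equiv toLex.injective (γ := shiftCfg z γ) (r := H.cell (shiftCfg z γ))
    (Equiv.addRight z) (toLex_add_lt_toLex_add_iff z) x
  rwa [shiftCfg_comp_addRight, comap_cell_shiftCfg] at h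

lemma isEquivariant_rule (P : Measure (Config d)) : IsEquivariant P H.rule :=
  fun z x => .of_forall fun γ => H.rule_shiftCfg z γ x

lemma measurable_levelRule (k : ℕ) (x : Site d) : Measurable fun γ => H.levelRule k γ x :=
  measurable_levelMatching toLex.injective measurable_id H.measurable_cell k x

lemma measurable_rule (x : Site d) : Measurable fun γ => H.rule γ x :=
  measurable_limitMatching toLex.injective measurable_id H.measurable_cell x

lemma rule_apply_ne {k : ℕ} {γ : Config d} {x : Site d} (hx : x ∉ H.unmatched k γ) :
    H.rule γ x ≠ x := by
  rw [rule, limitMatching_eq_levelMatching hx]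
  exact hx

lemma cell_rule {k : ℕ} {γ : Config d} {x : Site d} (hx : x ∉ H.unmatched (k + 1) γ) :
    H.cell γ k x (H.rule γ x) :=
  rel_limitMatching (H.monotone_cell γ) hx

lemma measurable_mem_unmatched (k : ℕ) (x : Site d) : Measurable fun γ => x ∈ H.unmatched k γ :=
  measurableSet_setOfPred.1 (H.measurable_levelRule k x (measurableSet_singleton x))

lemma mem_unmatched_shiftCfg (k : ℕ) (γ : Config d) (x z : Site d) :
    x + z ∈ H.unmatched k (shiftCfg z γ) ↔ x ∈ H.unmatched k γ := by
  rw [unmatched, Set.mem_ofPred_eq, levelRule_shiftCfg, _root_.add_left_inj]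
  rfl

lemma measurable_mem_boundary (k : ℕ) (B : Finset (Site d)) (x : Site d) :
    Measurable fun γ => x ∈ H.boundary k B γ :=
  .exists fun b => measurable_const.and (H.measurable_cell k x (x + b)).not

lemma mem_boundary_shiftCfg (k : ℕ) (B : Finset (Site d)) (γ : Config d) (x z : Site d) :
    x + z ∈ H.boundary k B (shiftCfg z γ) ↔ x ∈ H.boundary k B γ := by
  simp only [boundary, Set.mem_ofPred_eq, add_right_comm x z, H.cell_shiftCfg]

open Classical in
lemma card_unmatched_le_sum {k : ℕ} {γ : Config d} {L B : Finset (Site d)} (hBne : B.Nonempty)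
    (hB : ∀ b ∈ B, -b ∈ B) {x : Site d} (hL : ∀ y, y ∈ L ↔ H.cell γ k x y) :
    (({y ∈ L | y ∈ H.unmatched (k + 1) γ} : Finset (Site d)).card : ℝ) ≤
      ∑ y ∈ L, absMeanSpin B γ y +
        2 * ({y ∈ L | y ∈ H.boundary k B γ} : Finset (Site d)).card := by
  refine (card_unmatched_levelMatching_succ toLex.injective (H.monotone_cell γ) hL).trans_le
    (abs_sum_le_sum_abs_mean_add (fun y => (abs_spin (γ y)).le) hBne fun y hy hyD b hb => ?_)
  have hinner : ∀ c ∈ B, y + c ∈ L := by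
    intro c hc
    by_contra hcL
    refine hyD (Finset.mem_filter.2 ⟨hy, c, hc, fun hyc => hcL ?_⟩)
    exact (hL _).2 ((H.cell γ k).trans' ((hL y).1 hy) hyc)
  exact ⟨hinner b hb, sub_eq_add_neg y b ▸ hinner _ (hB b hb)⟩

lemma sum_indicator_unmatched_le {k : ℕ} {γ : Config d} {L B : Finset (Site d)}
    (hBne : B.Nonempty) (hB : ∀ b ∈ B, -b ∈ B) {x : Site d} (hL : ∀ y, y ∈ L ↔ H.cell γ k x y) :
    ∑ y ∈ L, (H.unmatched (k + 1) γ).indicator (1 : Site d → ℝ≥0∞) y ≤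
      ∑ y ∈ L, (ENNReal.ofReal (absMeanSpin B γ y) + 2 * (H.boundary k B γ).indicator 1 y) := by
  classical
  have hcard := ENNReal.ofReal_le_ofReal (H.card_unmatched_le_sum hBne hB hL)
  rw [ENNReal.ofReal_add (Finset.sum_nonneg fun y _ => absMeanSpin_nonneg B γ y) (by positivity),
    ENNReal.ofReal_sum_of_nonneg fun y _ => absMeanSpin_nonneg B γ y] at hcard
  rw [Finset.sum_add_distrib, ← Finset.mul_sum]
  simpa [Set.indicator_apply] using hcard

theorem measure_mem_unmatched_succ_le (hP : IsBernoulliHalfProduct P) {k : ℕ}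
    (hfin : ∀ᵐ γ ∂P, {y | H.cell γ k 0 y}.Finite) {B : Finset (Site d)} (hBne : B.Nonempty)
    (hB : ∀ b ∈ B, -b ∈ B) :
    P {γ | 0 ∈ H.unmatched (k + 1) γ} ≤
      ENNReal.ofReal (√B.card)⁻¹ + 2 * P {γ | 0 ∈ H.boundary k B γ} := by
  let g (γ : Config d) (x : Site d) : ℝ≥0∞ := (H.unmatched (k + 1) γ).indicator 1 x
  let h (γ : Config d) (x : Site d) : ℝ≥0∞ :=
    ENNReal.ofReal (absMeanSpin B γ x) + 2 * (H.boundary k B γ).indicator 1 x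
  have hg (x : Site d) : Measurable fun γ => g γ x :=
    measurable_indicator_one_apply (H.measurable_mem_unmatched (k + 1) x)
  have hcut (x : Site d) : Measurable fun γ => (H.boundary k B γ).indicator (1 : Site d → ℝ≥0∞) x :=
    measurable_indicator_one_apply (H.measurable_mem_boundary k B x)
  have hmean (x : Site d) : Measurable fun γ => ENNReal.ofReal (absMeanSpin B γ x) :=
    (measurable_absMeanSpin B x).ennreal_ofReal
  calc P {γ | 0 ∈ H.unmatched (k + 1) γ}
      = ∫⁻ γ, g γ 0 ∂P :=
        (lintegral_indicator_one_apply (H.measurable_mem_unmatched (k + 1) 0)).symm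
    _ ≤ ∫⁻ γ, h γ 0 ∂P := by
        refine lintegral_le_of_sum_class_le hP.measurePreserving_shiftCfg (H.measurable_cell k)
          (fun γ => H.cell_shiftCfg γ k) hfin hg (fun γ x z => ?_)
          (fun x => (hmean x).add ((hcut x).const_mul 2)) (fun γ x z => ?_)
          fun γ L hL => H.sum_indicator_unmatched_le hBne hB hL
        · exact indicator_one_congr (H.mem_unmatched_shiftCfg (k + 1) γ x z)
        · simp only [h, absMeanSpin_shiftCfg,
            indicator_one_congr (H.mem_boundary_shiftCfg k B γ x z)]
    _ = ∫⁻ γ, ENNReal.ofReal (absMeanSpin B γ 0) ∂P + 2 * P {γ | 0 ∈ H.boundary k B γ} := by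
        rw [lintegral_add_left (hmean 0), lintegral_const_mul _ (hcut 0),
          lintegral_indicator_one_apply (H.measurable_mem_boundary k B 0)]
    _ ≤ _ := by
        gcongr
        simpa only [absMeanSpin, zero_add] using hP.lintegral_abs_mean_spin_le B

end CellHierarchy

end CellHierarchy

section ZeroRuns

open ProbabilityTheory

variable {d : ℕ} {P : Measure (Config d)}

lemma IsBernoulliHalfProduct.iIndepSet_forall_eq (hP : IsBernoulliHalfProduct P) {ι : Type*}
    {S : ι → Finset (Site d)} (hS : Pairwise (Function.onFun Disjoint S)) (g : Config d) :
    iIndepSet (fun i => {γ : Config d | ∀ x ∈ S i, γ x = g x}) P := by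
  classical
  have := hP.1
  refine (iIndepSet_iff_meas_biInter fun i => measurableSet_cylinder (S i) g).2 fun T => ?_
  have hinter : ⋂ i ∈ T, {γ : Config d | ∀ x ∈ S i, γ x = g x} =
      {γ | ∀ x ∈ T.biUnion S, γ x = g x} := by
    ext γ
    simp only [Set.mem_iInter, Set.mem_ofPred_eq, Finset.mem_biUnion]
    exact ⟨fun h x ⟨i, hi, hx⟩ => h i hi x hx, fun h i hi x hx => h x ⟨i, hi, hx⟩⟩
  rw [hinter, hP.2, Finset.card_biUnion fun i _ j _ hij => hS hij, ← Finset.prod_pow_eq_pow_sum]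
  simp only [hP.2]

lemma IsBernoulliHalfProduct.measure_forall_not_forall_eq (hP : IsBernoulliHalfProduct P)
    {ι : Type*} {S : ι → Finset (Site d)} (hS : Pairwise (Function.onFun Disjoint S)) {m : ℕ}
    (hcard : ∀ i, (S i).card = m) (g : Config d) (T : Finset ι) :
    P {γ | ∀ i ∈ T, ¬ ∀ x ∈ S i, γ x = g x} = (1 - (1 / 2) ^ m) ^ T.card := by
  have := hP.1
  have hinter : {γ : Config d | ∀ i ∈ T, ¬ ∀ x ∈ S i, γ x = g x} =
      ⋂ i ∈ T, {γ : Config d | ∀ x ∈ S i, γ x = g x}ᶜ := by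
    ext γ
    simp
  rw [hinter, (iIndepSet_iff _ P).1 (hP.iIndepSet_forall_eq hS g) T
    fun i _ => (MeasurableSpace.measurableSet_generateFrom (Set.mem_singleton _)).compl]
  refine Finset.prod_eq_pow_card fun i _ => ?_
  rw [prob_compl_eq_one_sub (measurableSet_cylinder (S i) g), hP.2, hcard]

/-- The configuration vanishes at the `m` sites `z, z + e₁, …, z + (m - 1) e₁`. -/
def IsZeroRun (γ : Config d) (m : ℕ) (z : Site d) : Prop :=
  ∀ n < m, γ (z + n • e1 d) = false

lemma isZeroRun_shiftCfg (γ : Config d) (m : ℕ) (x z : Site d) :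
    IsZeroRun (shiftCfg z γ) m (x + z) ↔ IsZeroRun γ m x := by
  simp only [IsZeroRun, add_right_comm x z, shiftCfg_add]

lemma measurable_isZeroRun (m : ℕ) (z : Site d) :
    Measurable fun γ : Config d => IsZeroRun γ m z :=
  .forall fun n => measurable_const.imp (measurableSet_setOfPred.1
    (measurableSet_eq_fun (measurable_pi_apply (z + n • e1 d)) measurable_const))

/-- The sites of the zero run of length `m` starting at `z`. -/
def runSites (m : ℕ) (z : Site d) : Finset (Site d) :=
  (Finset.range m).image fun n => z + n • e1 d

lemma isZeroRun_iff {γ : Config d} {m : ℕ} {z : Site d} :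
    IsZeroRun γ m z ↔ ∀ x ∈ runSites m z, γ x = false := by
  simp [IsZeroRun, runSites]

lemma add_nsmul_e1_apply_zero (hd : 0 < d) (z : Site d) (n : ℕ) :
    (z + n • e1 d) ⟨0, hd⟩ = z ⟨0, hd⟩ + n := by
  simp [e1]

lemma card_runSites (hd : 0 < d) (m : ℕ) (z : Site d) : (runSites m z).card = m := by
  rw [runSites, Finset.card_image_of_injective, Finset.card_range]
  intro n n' h
  have h₀ := congrFun h ⟨0, hd⟩
  simp only [add_nsmul_e1_apply_zero hd] at h₀
  omega

lemma IsBernoulliHalfProduct.measure_isZeroRun (hP : IsBernoulliHalfProduct P) (hd : 0 < d)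
    (m : ℕ) (z : Site d) : P {γ | IsZeroRun γ m z} = (1 / 2) ^ m := by
  simp only [isZeroRun_iff]
  rw [hP.2 _ fun _ => false, card_runSites hd]

/-- Rescaling by `m` in the direction of `e₁`, so that the zero runs of length `m` starting at
distinct sites of the image are disjoint. -/
def stretch (m : ℕ) (t : Site d) : Site d := fun i => if (i : ℕ) = 0 then m * t i else t i

lemma stretch_apply_zero (hd : 0 < d) (m : ℕ) (t : Site d) :
    stretch m t ⟨0, hd⟩ = m * t ⟨0, hd⟩ := if_pos rfl

lemma pairwise_disjoint_runSites_stretch (hd : 0 < d) (m : ℕ) :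
    Pairwise (Function.onFun Disjoint fun t : Site d => runSites m (stretch m t)) := by
  intro t t' hne
  refine Finset.disjoint_left.2 fun x hx hx' => hne ?_
  obtain ⟨n, hn, rfl⟩ := Finset.mem_image.1 hx
  obtain ⟨n', hn', heq⟩ := Finset.mem_image.1 hx'
  rw [Finset.mem_range] at hn hn'
  ext i
  by_cases hi : (i : ℕ) = 0
  · obtain rfl : i = ⟨0, hd⟩ := Fin.ext hi
    have h := congrFun heq ⟨0, hd⟩
    rw [add_nsmul_e1_apply_zero, add_nsmul_e1_apply_zero, stretch_apply_zero,
      stretch_apply_zero] at h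
    have hdiv (a : ℤ) {b : ℕ} (hb : b < m) : (m * a + b) / m = a := by
      rw [Int.mul_add_ediv_left _ _ (by omega), Int.ediv_eq_zero_of_lt (by omega) (by omega),
        add_zero]
    rw [← hdiv (t _) hn, ← h, hdiv _ hn']
  · simpa [stretch, e1, hi] using (congrFun heq i).symm

lemma IsBernoulliHalfProduct.measure_forall_not_isZeroRun (hP : IsBernoulliHalfProduct P)
    (hd : 0 < d) (m : ℕ) (T : Finset (Site d)) :
    P {γ | ∀ t ∈ T, ¬ IsZeroRun γ m (stretch m t)} = (1 - (1 / 2) ^ m) ^ T.card := by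
  simp only [isZeroRun_iff]
  exact hP.measure_forall_not_forall_eq (pairwise_disjoint_runSites_stretch hd m)
    (fun t => card_runSites hd m _) (fun _ => false) T

end ZeroRuns

section Cubes

variable {d : ℕ}

/-- The cube of the sites at distance at most `R` from the origin. -/
def cube (d R : ℕ) : Finset (Site d) := Finset.Icc (fun _ => -(R : ℤ)) fun _ => R

lemma mem_cube_iff_abs_le {R : ℕ} {x : Site d} : x ∈ cube d R ↔ ∀ i, |x i| ≤ R := by
  simp only [cube, Finset.mem_Icc, Pi.le_def, ← forall_and, abs_le]

lemma mem_cube {R : ℕ} {x : Site d} : x ∈ cube d R ↔ ‖x‖ ≤ R := by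
  rw [mem_cube_iff_abs_le, pi_norm_le_iff_of_nonneg R.cast_nonneg]
  simp only [Int.norm_eq_abs]
  exact_mod_cast Iff.rfl

lemma card_cube (d R : ℕ) : (cube d R).card = (2 * R + 1) ^ d := by
  rw [cube, Pi.card_Icc]
  simp only [Int.card_Icc, Finset.prod_const, Finset.card_univ, Fintype.card_fin]
  congr 1
  omega

lemma zero_mem_cube (d R : ℕ) : 0 ∈ cube d R := by
  simp [mem_cube]

lemma neg_mem_cube {R : ℕ} {x : Site d} (hx : x ∈ cube d R) : -x ∈ cube d R := by
  rwa [mem_cube, norm_neg, ← mem_cube]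

lemma add_mem_cube {R S : ℕ} {x y : Site d} (hx : x ∈ cube d R) (hy : y ∈ cube d S) :
    x + y ∈ cube d (R + S) := by
  rw [mem_cube] at *
  push_cast
  exact norm_add_le_of_le hx hy

lemma sub_mem_cube {R S : ℕ} {x y : Site d} (hx : x ∈ cube d R) (hy : y ∈ cube d S) :
    x - y ∈ cube d (R + S) :=
  sub_eq_add_neg x y ▸ add_mem_cube hx (neg_mem_cube hy)

lemma cube_mono {R S : ℕ} (h : R ≤ S) : cube d R ⊆ cube d S := fun x hx =>
  mem_cube.2 <| (mem_cube.1 hx).trans <| by exact_mod_cast h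

lemma card_cube_sdiff_cube_le {R s : ℕ} (hR : 1 ≤ R) (hs : s ≤ R) :
    ((cube d (R + s) \ cube d (R - s)).card : ℝ) ≤ 4 * d * 5 ^ (d - 1) * s * R ^ (d - 1) := by
  have hR' : (1 : ℝ) ≤ R := by exact_mod_cast hR
  have hs' : (s : ℝ) ≤ R := by exact_mod_cast hs
  rw [Finset.card_sdiff_of_subset (cube_mono (by omega)), card_cube, card_cube,
    Nat.cast_sub (by gcongr; omega)]
  push_cast [Nat.cast_sub hs]
  have hpow := (le_abs_self _).trans
    (abs_pow_sub_pow_le (2 * (R + s : ℝ) + 1) (2 * (R - s : ℝ) + 1) d)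
  rw [abs_of_nonneg (by positivity : (0 : ℝ) ≤ 2 * (R + s) + 1),
    abs_of_nonneg (by linarith : (0 : ℝ) ≤ 2 * (R - s) + 1),
    max_eq_left (by linarith [s.cast_nonneg (α := ℝ)]),
    show 2 * (R + s : ℝ) + 1 - (2 * (R - s) + 1) = 4 * s by ring, abs_of_nonneg (by positivity)]
    at hpow
  calc (2 * (R + s : ℝ) + 1) ^ d - (2 * (R - s) + 1) ^ d
      ≤ 4 * s * d * (2 * (R + s) + 1) ^ (d - 1) := hpow
    _ ≤ 4 * s * d * (5 * R) ^ (d - 1) := by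
        gcongr
        linarith
    _ = 4 * d * 5 ^ (d - 1) * s * R ^ (d - 1) := by ring

end Cubes

section CentralRun

variable {d : ℕ} {P : Measure (Config d)}

lemma exists_card_stretch_mem_cube (hd : 0 < d) {m : ℕ} (hm : 0 < m) (R : ℕ) :
    ∃ T : Finset (Site d), (∀ t ∈ T, stretch m t ∈ cube d R) ∧ R ^ d ≤ m * T.card := by
  refine ⟨Finset.Icc 0 fun i => if (i : ℕ) = 0 then (R / m : ℕ) else R, fun t ht => ?_, ?_⟩
  · rw [Finset.mem_Icc, Pi.le_def, Pi.le_def] at ht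
    refine mem_cube_iff_abs_le.2 fun i => ?_
    have h0 := ht.1 i
    have h1 := ht.2 i
    simp only [Pi.zero_apply, stretch] at h0 h1 ⊢
    split_ifs at h1 ⊢
    · rw [abs_of_nonneg (by positivity)]
      calc (m * t i : ℤ) ≤ m * (R / m : ℕ) := by gcongr
        _ ≤ R := by exact_mod_cast Nat.mul_div_le R m
    · rwa [abs_of_nonneg h0]
  · obtain ⟨n, rfl⟩ := Nat.exists_eq_succ_of_ne_zero hd.ne'
    rw [Pi.card_Icc, Fin.prod_univ_succ]
    simp only [Fin.val_zero, Fin.val_succ, if_true, Nat.succ_ne_zero, if_false, Int.card_Icc,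
      Pi.zero_apply, sub_zero, Finset.prod_const, Finset.card_univ, Fintype.card_fin]
    calc R ^ (n + 1) = R * R ^ n := pow_succ' R n
      _ ≤ (m * (R / m + 1)) * (R + 1) ^ n := by
          gcongr
          · exact (Nat.lt_mul_div_succ R hm).le
          · omega
      _ = _ := by rw [mul_assoc]; norm_cast

lemma ofReal_half_pow (n : ℕ) : ENNReal.ofReal ((1 / 2) ^ n) = (1 / 2) ^ n := by
  rw [ENNReal.ofReal_pow (by norm_num), ENNReal.ofReal_div_of_pos two_pos]
  simp

lemma one_sub_half_pow_pow_le_half (m : ℕ) : (1 - (1 / 2 : ℝ≥0∞) ^ m) ^ 2 ^ m ≤ 1 / 2 := by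
  have hreal : (1 - (1 / 2 : ℝ) ^ m) ^ 2 ^ m ≤ 1 / 2 := by
    have h := Real.one_sub_div_pow_le_exp_neg (n := 2 ^ m) (t := 1)
      (by exact_mod_cast Nat.one_le_two_pow)
    push_cast at h
    rw [one_div_pow]
    exact h.trans Real.exp_neg_one_lt_half.le
  have h0 : (0 : ℝ) ≤ 1 - (1 / 2) ^ m := sub_nonneg.2 (pow_le_one₀ (by norm_num) (by norm_num))
  rw [← ofReal_half_pow, ← ENNReal.ofReal_one, ← ENNReal.ofReal_sub _ (by positivity),
    ← ENNReal.ofReal_pow h0]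
  simpa [ENNReal.ofReal_inv_of_pos] using ENNReal.ofReal_le_ofReal hreal

/-- The length of the zero runs which open a cutter of radius `2 ^ j`. It is such that, up to a
factor of order `(j + 1) ^ 2`, one such run is expected in a cube of this radius: the factor is
large enough for a run to be present with overwhelming probability. The subtraction is truncated,
so that every site starts a run as long as `j` is small. -/
def runLength (d j : ℕ) : ℕ := d * j - 2 * (Nat.log 2 (j + 1) + d)

lemma two_pow_pow_le (d j : ℕ) : (2 ^ j) ^ d ≤ 2 ^ runLength d j * ((j + 1) ^ 2 * 4 ^ d) := by
  have hlog : 2 ^ Nat.log 2 (j + 1) ≤ j + 1 := Nat.pow_log_le_self 2 j.succ_ne_zero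
  calc (2 ^ j) ^ d = 2 ^ (d * j) := by rw [← pow_mul, mul_comm]
    _ ≤ 2 ^ (runLength d j + 2 * (Nat.log 2 (j + 1) + d)) := by
        gcongr
        · norm_num
        · exact le_tsub_add
    _ = 2 ^ runLength d j * ((2 ^ Nat.log 2 (j + 1)) ^ 2 * 4 ^ d) := by
        rw [show 4 ^ d = 2 ^ (2 * d) from (pow_mul 2 2 d).symm]
        ring
    _ ≤ _ := by gcongr

lemma two_pow_runLength_mul_le {j : ℕ} (hd : 0 < d) (hj : 0 < runLength d j) :
    2 ^ runLength d j * (d * (j + 1) ^ 2) ≤ (2 ^ j) ^ d := by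
  have hlog : j + 1 ≤ 2 ^ (Nat.log 2 (j + 1) + 1) := (Nat.lt_pow_succ_log_self one_lt_two _).le
  have hpow : d ≤ 4 ^ (d - 1) := by
    have := Nat.lt_pow_self (n := d - 1) (a := 4) (by norm_num)
    omega
  calc 2 ^ runLength d j * (d * (j + 1) ^ 2)
      ≤ 2 ^ runLength d j * (4 ^ (d - 1) * (2 ^ (Nat.log 2 (j + 1) + 1)) ^ 2) := by gcongr
    _ = 2 ^ (runLength d j + 2 * (Nat.log 2 (j + 1) + d)) := by
        rw [show 4 = 2 ^ 2 by rfl, ← pow_mul, ← pow_mul, ← pow_add, ← pow_add]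
        congr 1
        omega
    _ = (2 ^ j) ^ d := by
        rw [← pow_mul, mul_comm j d]
        congr 1
        unfold runLength at hj ⊢
        omega

/-- The event that no zero run of length `runLength d j` starts in the cube of radius `2 ^ j`
around the origin. -/
def noRun (d j : ℕ) : Set (Config d) :=
  {γ | ∀ z ∈ cube d (2 ^ j), ¬ IsZeroRun γ (runLength d j) z}

theorem IsBernoulliHalfProduct.measure_noRun_le (hP : IsBernoulliHalfProduct P) (hd : 0 < d)
    (j : ℕ) : P (noRun d j) ≤ (1 / 2) ^ j := by
  rcases (runLength d j).eq_zero_or_pos with hm | hm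
  · have hempty : noRun d j = ∅ := Set.eq_empty_of_forall_notMem fun γ hγ =>
      hγ 0 (zero_mem_cube d _) fun n hn => absurd (hm ▸ hn) n.not_lt_zero
    simp [hempty]
  obtain ⟨T, hT, hcard⟩ := exists_card_stretch_mem_cube hd hm (2 ^ j)
  have hle : runLength d j ≤ d * (j + 1) := by
    unfold runLength
    lia
  have hTcard : 2 ^ runLength d j * (j + 1) ≤ T.card := by
    refine Nat.le_of_mul_le_mul_left (le_trans ?_ hcard) hm
    calc runLength d j * (2 ^ runLength d j * (j + 1))
        ≤ d * (j + 1) * (2 ^ runLength d j * (j + 1)) := by gcongr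
      _ = 2 ^ runLength d j * (d * (j + 1) ^ 2) := by ring
      _ ≤ (2 ^ j) ^ d := two_pow_runLength_mul_le hd hm
  calc P (noRun d j)
      ≤ P {γ | ∀ t ∈ T, ¬ IsZeroRun γ (runLength d j) (stretch (runLength d j) t)} :=
        measure_mono fun γ hγ t ht => hγ _ (hT t ht)
    _ = (1 - (1 / 2) ^ runLength d j) ^ T.card := hP.measure_forall_not_isZeroRun hd _ T
    _ ≤ (1 - (1 / 2) ^ runLength d j) ^ (2 ^ runLength d j * (j + 1)) :=
        pow_le_pow_right_of_le_one' tsub_le_self hTcard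
    _ ≤ (1 / 2) ^ (j + 1) := by
        rw [pow_mul]
        gcongr
        exact one_sub_half_pow_pow_le_half _
    _ ≤ (1 / 2) ^ j := pow_le_pow_right_of_le_one' (by simp) j.le_succ

lemma IsBernoulliHalfProduct.ae_eventually_notMem_noRun (hP : IsBernoulliHalfProduct P)
    (hd : 0 < d) : ∀ᵐ γ ∂P, ∀ᶠ j in Filter.atTop, γ ∉ noRun d j := by
  refine ae_eventually_notMem (ne_top_of_le_ne_top ?_
    (ENNReal.tsum_le_tsum fun j => hP.measure_noRun_le hd j))
  simp [ENNReal.tsum_geometric]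

end CentralRun

section RunCells

variable {d : ℕ} {P : Measure (Config d)}

/-- Every zero run of length `runLength d j` serves as the centre of a cutter, the boundary of the
cube of radius `2 ^ j` around its starting site. The cells of level `k` are the classes of sites
not separated by the cutters of the radii `2 ^ j`, `j ≥ k`. -/
def runCells (d : ℕ) : CellHierarchy d where
  cell γ k :=
    { r x y := ∀ j ≥ k, ∀ z, IsZeroRun γ (runLength d j) z →
        (z - x ∈ cube d (2 ^ j) ↔ z - y ∈ cube d (2 ^ j))
      iseqv :=
        { refl _ _ _ _ _ := Iff.rfl
          symm h j hj z hz := (h j hj z hz).symm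
          trans h h' j hj z hz := (h j hj z hz).trans (h' j hj z hz) } }
  monotone_cell _ _ _ hkl _ _ h j hj := h j (hkl.trans hj)
  measurable_cell _ _ _ := .forall fun j => .forall fun _ => .forall fun z =>
    (measurable_isZeroRun (runLength d j) z).imp measurable_const
  cell_shiftCfg γ k x y z := by
    refine forall₂_congr fun j _ => ((Equiv.addRight z).forall_congr fun {w} => ?_).symm
    simp only [Equiv.coe_addRight, isZeroRun_shiftCfg, add_sub_add_right_eq_sub]

lemma mem_cube_of_cell_runCells {γ : Config d} {k j : ℕ} (hkj : k ≤ j) (hj : γ ∉ noRun d j)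
    {y : Site d} (h : (runCells d).cell γ k 0 y) : y ∈ cube d (2 ^ (j + 1)) := by
  simp only [noRun, Set.mem_ofPred_eq, not_forall, not_not] at hj
  obtain ⟨z, hz, hrun⟩ := hj
  have hzy := (h j hkj z hrun).1 (by rwa [sub_zero])
  simpa [pow_succ, mul_two] using sub_mem_cube hz hzy

lemma IsBernoulliHalfProduct.ae_finite_cell_runCells (hP : IsBernoulliHalfProduct P) (hd : 0 < d)
    (k : ℕ) : ∀ᵐ γ ∂P, {y | (runCells d).cell γ k 0 y}.Finite := by
  filter_upwards [hP.ae_eventually_notMem_noRun hd] with γ hγ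
  obtain ⟨j, hj, hkj⟩ := (hγ.and (Filter.eventually_ge_atTop k)).exists
  exact (cube d (2 ^ (j + 1))).finite_toSet.subset fun y hy => mem_cube_of_cell_runCells hkj hj hy

/-- The event that the cutter of some run of length `runLength d j` passes within distance `s`
of the origin. -/
def cutNear (d j s : ℕ) : Set (Config d) :=
  {γ | ∃ z ∈ cube d (2 ^ j + s) \ cube d (2 ^ j - s), IsZeroRun γ (runLength d j) z}

lemma exists_mem_cutNear_of_mem_boundary {γ : Config d} {k s : ℕ} (hs : s ≤ 2 ^ k)
    (h : 0 ∈ (runCells d).boundary k (cube d s) γ) : ∃ i, γ ∈ cutNear d (k + i) s := by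
  obtain ⟨b, hb, hcell⟩ := h
  rw [zero_add] at hcell
  have hcell' : ∃ j ≥ k, ∃ z, IsZeroRun γ (runLength d j) z ∧
      ¬ (z - 0 ∈ cube d (2 ^ j) ↔ z - b ∈ cube d (2 ^ j)) := by
    by_contra! hall
    exact hcell hall
  obtain ⟨j, hj, z, hrun, hz⟩ := hcell'
  obtain ⟨i, rfl⟩ := Nat.exists_eq_add_of_le hj
  have hs' : s ≤ 2 ^ (k + i) := hs.trans (by gcongr; omega)
  rw [sub_zero] at hz
  refine ⟨i, z, Finset.mem_sdiff.2 ⟨?_, fun hin => hz ?_⟩, hrun⟩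
  · by_cases hz' : z ∈ cube d (2 ^ (k + i))
    · exact cube_mono (by omega) hz'
    · have hzb : z - b ∈ cube d (2 ^ (k + i)) := by tauto
      simpa using add_mem_cube hzb hb
  · have hzb := sub_mem_cube hin hb
    rw [Nat.sub_add_cancel hs'] at hzb
    exact iff_of_true (cube_mono (by omega) hin) hzb

lemma IsBernoulliHalfProduct.measure_cutNear_le (hP : IsBernoulliHalfProduct P) (hd : 0 < d)
    {j s : ℕ} (hs : s ≤ 2 ^ j) :
    P (cutNear d j s) ≤
      ENNReal.ofReal (4 * d * 5 ^ (d - 1) * 4 ^ d * s * ((j + 1) ^ 2 * (1 / 2) ^ j)) := by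
  set S := cube d (2 ^ j + s) \ cube d (2 ^ j - s)
  have hrun : (1 / 2 : ℝ) ^ runLength d j ≤ (j + 1) ^ 2 * 4 ^ d / (2 ^ j) ^ d := by
    rw [one_div_pow, div_le_div_iff₀ (by positivity) (by positivity), one_mul, mul_comm]
    exact_mod_cast two_pow_pow_le d j
  have hcard := card_cube_sdiff_cube_le (d := d) (Nat.one_le_two_pow (n := j)) hs
  calc P (cutNear d j s) = P (⋃ z ∈ S, {γ | IsZeroRun γ (runLength d j) z}) := by
        congr 1
        ext γ
        simp [cutNear, S]
    _ ≤ ∑ z ∈ S, P {γ | IsZeroRun γ (runLength d j) z} := measure_biUnion_finset_le S _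
    _ = ENNReal.ofReal (S.card * (1 / 2) ^ runLength d j) := by
        simp only [hP.measure_isZeroRun hd, Finset.sum_const, nsmul_eq_mul]
        rw [ENNReal.ofReal_mul (by positivity), ofReal_half_pow, ENNReal.ofReal_natCast]
    _ ≤ _ := by
        refine ENNReal.ofReal_le_ofReal ((mul_le_mul hcard hrun (by positivity)
          (by positivity)).trans_eq ?_)
        obtain ⟨n, rfl⟩ := Nat.exists_eq_succ_of_ne_zero hd.ne'
        simp only [Nat.succ_eq_add_one, Nat.add_sub_cancel, one_div_pow]
        push_cast
        field_simp
        ring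

/-- The constant in the bound for the density of the boundary sites. -/
def boundaryConst (d : ℕ) : ℝ :=
  4 * d * 5 ^ (d - 1) * 4 ^ d * ∑' i : ℕ, (i + 1 : ℝ) ^ 2 * (1 / 2) ^ i

lemma boundaryConst_nonneg (d : ℕ) : 0 ≤ boundaryConst d :=
  mul_nonneg (by positivity) (tsum_nonneg fun i => by positivity)

lemma summable_succ_sq_mul_half_pow : Summable fun i : ℕ => (i + 1 : ℝ) ^ 2 * (1 / 2) ^ i := by
  have h := (summable_nat_add_iff 1).2
    (summable_pow_mul_geometric_of_norm_lt_one (R := ℝ) 2 (r := 1 / 2) (by norm_num))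
  refine (h.mul_left 2).congr fun i => ?_
  push_cast
  ring

theorem IsBernoulliHalfProduct.measure_mem_boundary_runCells_le (hP : IsBernoulliHalfProduct P)
    (hd : 0 < d) {k s : ℕ} (hs : s ≤ 2 ^ k) :
    P {γ | 0 ∈ (runCells d).boundary k (cube d s) γ} ≤
      ENNReal.ofReal (boundaryConst d * (s * ((k + 1) ^ 2 * (1 / 2) ^ k))) := by
  have hterm (i : ℕ) : ((k + i : ℕ) + 1 : ℝ) ^ 2 * (1 / 2) ^ (k + i) ≤
      (k + 1) ^ 2 * (1 / 2) ^ k * ((i + 1) ^ 2 * (1 / 2) ^ i) := by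
    calc ((k + i : ℕ) + 1 : ℝ) ^ 2 * (1 / 2) ^ (k + i)
        ≤ ((k + 1) * (i + 1) : ℝ) ^ 2 * (1 / 2) ^ (k + i) := by
          gcongr
          push_cast
          nlinarith [mul_nonneg (k.cast_nonneg (α := ℝ)) (i.cast_nonneg (α := ℝ))]
      _ = _ := by ring
  set c : ℝ := 4 * d * 5 ^ (d - 1) * 4 ^ d * s
  calc P {γ | 0 ∈ (runCells d).boundary k (cube d s) γ}
      ≤ P (⋃ i, cutNear d (k + i) s) :=
        measure_mono fun γ hγ => Set.mem_iUnion.2 (exists_mem_cutNear_of_mem_boundary hs hγ)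
    _ ≤ ∑' i, P (cutNear d (k + i) s) := measure_iUnion_le _
    _ ≤ ∑' i : ℕ, ENNReal.ofReal
          (c * ((k + 1) ^ 2 * (1 / 2) ^ k) * ((i + 1) ^ 2 * (1 / 2) ^ i)) := by
        refine ENNReal.tsum_le_tsum fun i => (hP.measure_cutNear_le hd
          (hs.trans (by gcongr <;> omega))).trans (ENNReal.ofReal_le_ofReal ?_)
        rw [mul_assoc c]
        exact mul_le_mul_of_nonneg_left (hterm i) (by positivity)
    _ = _ := by
        rw [← ENNReal.ofReal_tsum_of_nonneg (fun i => by positivity)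
          (summable_succ_sq_mul_half_pow.mul_left _), tsum_mul_left]
        congr 1
        simp only [boundaryConst, c]
        ring

end RunCells

section TailEstimate

variable {d : ℕ} {P : Measure (Config d)}

/-- The exponent `β'` in the tail bound for the matching distance. -/
def tailExponent (d : ℕ) : ℝ := d / (d + 2)

lemma tailExponent_pos (hd : 0 < d) : 0 < tailExponent d := by
  unfold tailExponent
  positivity

lemma tailExponent_le_one (d : ℕ) : tailExponent d ≤ 1 :=
  div_le_one_of_le₀ (by linarith) (by positivity)

/- For `s` of order `N ^ a`, the quantities `s ^ (-d / 2)` and `s / N` are of the same order when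
`a = 2 / (d + 2)`. -/
lemma exists_radius_le (d : ℕ) {N : ℕ} (hN : 1 ≤ N) :
    ∃ s ≤ N, (√(cube d s).card)⁻¹ ≤ (N : ℝ) ^ (-tailExponent d) ∧
      (s : ℝ) / N ≤ (N : ℝ) ^ (-tailExponent d) := by
  set a : ℝ := 2 / (d + 2)
  have hN' : (1 : ℝ) ≤ N := by exact_mod_cast hN
  have ha : a ≤ 1 := div_le_one_of_le₀ (by linarith [d.cast_nonneg (α := ℝ)]) (by positivity)
  have had : a * d = tailExponent d * 2 := by
    simp only [a, tailExponent]
    ring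
  have ha1 : a - 1 = -tailExponent d := by
    simp only [a, tailExponent]
    field_simp
    ring
  have hfloor : ((⌊(N : ℝ) ^ a⌋₊ : ℕ) : ℝ) ≤ (N : ℝ) ^ a := Nat.floor_le (by positivity)
  have hfloor' : (N : ℝ) ^ a ≤ ⌊(N : ℝ) ^ a⌋₊ + 1 := (Nat.lt_floor_add_one _).le
  refine ⟨⌊(N : ℝ) ^ a⌋₊, ?_, ?_, ?_⟩
  · exact Nat.floor_le_of_le (Real.rpow_le_self_of_one_le hN' ha)
  · rw [Real.rpow_neg (by positivity)]
    refine inv_anti₀ (by positivity) (Real.le_sqrt_of_sq_le ?_)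
    rw [← Real.rpow_mul_natCast (by positivity), card_cube]
    push_cast
    rw [← had, Real.rpow_mul_natCast (by positivity)]
    gcongr
    linarith
  · rw [← ha1, Real.rpow_sub_one (by positivity)]
    gcongr

/-- The constant in the bound for the density of the sites unmatched inside the cells of a given
level. -/
def unmatchedConst (d : ℕ) : ℝ := 1 + 2 * boundaryConst d

lemma unmatchedConst_nonneg (d : ℕ) : 0 ≤ unmatchedConst d := by
  have := boundaryConst_nonneg d
  unfold unmatchedConst
  positivity

theorem IsBernoulliHalfProduct.measure_mem_unmatched_runCells_le (hP : IsBernoulliHalfProduct P)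
    (hd : 0 < d) (k : ℕ) :
    P {γ | 0 ∈ (runCells d).unmatched (k + 1) γ} ≤
      ENNReal.ofReal (unmatchedConst d * ((k + 1) ^ 2 * (2 ^ k) ^ (-tailExponent d))) := by
  obtain ⟨s, hs, hmean, hbdry⟩ := exists_radius_le d (Nat.one_le_two_pow (n := k))
  push_cast at hmean hbdry
  have hb := boundaryConst_nonneg d
  set u : ℝ := (2 ^ k) ^ (-tailExponent d)
  have hu : 0 ≤ u := by positivity
  calc P {γ | 0 ∈ (runCells d).unmatched (k + 1) γ}
      ≤ ENNReal.ofReal (√(cube d s).card)⁻¹ +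
          2 * P {γ | 0 ∈ (runCells d).boundary k (cube d s) γ} :=
        (runCells d).measure_mem_unmatched_succ_le hP (hP.ae_finite_cell_runCells hd k)
          ⟨0, zero_mem_cube d s⟩ fun _ => neg_mem_cube
    _ ≤ ENNReal.ofReal (√(cube d s).card)⁻¹ +
          2 * ENNReal.ofReal (boundaryConst d * (s * ((k + 1) ^ 2 * (1 / 2) ^ k))) := by
        gcongr
        exact hP.measure_mem_boundary_runCells_le hd hs
    _ = ENNReal.ofReal ((√(cube d s).card)⁻¹ +
          2 * (boundaryConst d * ((k + 1) ^ 2 * (s / 2 ^ k)))) := by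
        rw [ENNReal.ofReal_add (by positivity) (by positivity), ENNReal.ofReal_mul zero_le_two,
          ENNReal.ofReal_ofNat, one_div_pow]
        ring_nf
    _ ≤ ENNReal.ofReal ((k + 1) ^ 2 * u + 2 * (boundaryConst d * ((k + 1) ^ 2 * u))) := by
        gcongr
        refine hmean.trans (le_mul_of_one_le_left hu (one_le_pow₀ ?_))
        linarith [k.cast_nonneg (α := ℝ)]
    _ = _ := by
        rw [unmatchedConst]
        ring_nf

lemma tendsto_succ_sq_mul_rpow_neg {β : ℝ} (hβ : 0 < β) :
    Filter.Tendsto (fun k : ℕ => (k + 1 : ℝ) ^ 2 * (2 ^ k) ^ (-β)) Filter.atTop (nhds 0) := by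
  have hlt : (2 : ℝ) ^ (-β) < 1 := Real.rpow_lt_one_of_one_lt_of_neg one_lt_two (neg_neg_of_pos hβ)
  have h := (Filter.tendsto_add_atTop_iff_nat 1).2
    (tendsto_pow_const_mul_const_pow_of_abs_lt_one 2
      ((abs_of_nonneg (by positivity : (0 : ℝ) ≤ 2 ^ (-β))).trans_lt hlt))
  have h' := h.div_const ((2 : ℝ) ^ (-β))
  rw [zero_div] at h'
  refine h'.congr fun k => ?_
  rw [← Real.rpow_natCast_mul zero_le_two, mul_comm (k : ℝ), Real.rpow_mul_natCast zero_le_two]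
  push_cast
  field_simp
  ring

lemma IsBernoulliHalfProduct.ae_runCells_rule_ne (hP : IsBernoulliHalfProduct P) (hd : 0 < d) :
    ∀ᵐ γ ∂P, ∀ x, (runCells d).rule γ x ≠ x := by
  have hzero : P {γ | ∀ k, 0 ∈ (runCells d).unmatched (k + 1) γ} = 0 := by
    have hlim := ENNReal.tendsto_ofReal
      ((tendsto_succ_sq_mul_rpow_neg (tailExponent_pos hd)).const_mul (unmatchedConst d))
    rw [mul_zero, ENNReal.ofReal_zero] at hlim
    refine nonpos_iff_eq_zero.1 (ge_of_tendsto' hlim fun k => ?_)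
    exact (measure_mono (Set.ofPred_subset_ofPred.2 fun γ hγ => hγ k)).trans
      (hP.measure_mem_unmatched_runCells_le hd k)
  refine ae_all_iff.2 fun x => ?_
  have hx := (hP.measurePreserving_shiftCfg (-x)).quasiMeasurePreserving.ae
    (measure_eq_zero_iff_ae_notMem.1 hzero)
  filter_upwards [hx] with γ hγ
  obtain ⟨k, hk⟩ := not_forall.1 hγ
  refine (runCells d).rule_apply_ne (k := k + 1) fun hmem => hk ?_
  rwa [← add_neg_cancel x, (runCells d).mem_unmatched_shiftCfg]

theorem IsBernoulliHalfProduct.isMatchingRule_runCells (hP : IsBernoulliHalfProduct P)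
    (hd : 0 < d) : IsMatchingRule P (runCells d).rule := by
  refine ⟨(runCells d).measurable_rule, ?_⟩
  filter_upwards [hP.ae_runCells_rule_ne hd] with γ hγ
  exact (isPartialMatching_limitMatching toLex.injective γ _).isMatching hγ

lemma norm_runCells_rule_le {γ : Config d} {n : ℕ} (hmatched : 0 ∉ (runCells d).unmatched (n + 1) γ)
    (hrun : γ ∉ noRun d n) : ‖(runCells d).rule γ 0‖ ≤ 2 ^ (n + 1) := by
  have h := mem_cube.1 (mem_cube_of_cell_runCells le_rfl hrun ((runCells d).cell_rule hmatched))
  exact_mod_cast h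

lemma IsBernoulliHalfProduct.measure_two_pow_lt_ZΦ_le (hP : IsBernoulliHalfProduct P)
    (hd : 0 < d) (n : ℕ) :
    P {γ | 2 ^ (n + 1) < ZΦ (runCells d).rule γ} ≤
      ENNReal.ofReal ((unmatchedConst d + 1) * ((n + 1) ^ 2 * (2 ^ n) ^ (-tailExponent d))) := by
  have hC := unmatchedConst_nonneg d
  have hsub : {γ | 2 ^ (n + 1) < ZΦ (runCells d).rule γ} ⊆
      {γ | 0 ∈ (runCells d).unmatched (n + 1) γ} ∪ noRun d n := by
    intro γ hγ
    by_contra hnot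
    rw [Set.mem_union, not_or] at hnot
    exact (norm_runCells_rule_le hnot.1 hnot.2).not_gt hγ
  have hpow : (1 / 2 : ℝ) ^ n ≤ (n + 1) ^ 2 * (2 ^ n) ^ (-tailExponent d) := by
    calc (1 / 2 : ℝ) ^ n = (2 ^ n) ^ (-1 : ℝ) := by rw [one_div_pow, Real.rpow_neg_one, one_div]
      _ ≤ (2 ^ n) ^ (-tailExponent d) :=
        Real.rpow_le_rpow_of_exponent_le (one_le_pow₀ one_le_two)
          (neg_le_neg (tailExponent_le_one d))
      _ ≤ _ := le_mul_of_one_le_left (by positivity)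
        (one_le_pow₀ (by linarith [n.cast_nonneg (α := ℝ)]))
  calc P {γ | 2 ^ (n + 1) < ZΦ (runCells d).rule γ}
      ≤ P {γ | 0 ∈ (runCells d).unmatched (n + 1) γ} + P (noRun d n) :=
        (measure_mono hsub).trans (measure_union_le _ _)
    _ ≤ ENNReal.ofReal (unmatchedConst d * ((n + 1) ^ 2 * (2 ^ n) ^ (-tailExponent d))) +
          ENNReal.ofReal ((1 / 2) ^ n) := by
        rw [ofReal_half_pow]
        exact add_le_add (hP.measure_mem_unmatched_runCells_le hd n) (hP.measure_noRun_le hd n)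
    _ ≤ _ := by
        rw [← ENNReal.ofReal_add (by positivity) (by positivity), add_one_mul]
        gcongr

lemma succ_sq_mul_two_pow_rpow_neg_le {β r : ℝ} (hβ : 0 ≤ β) (hβ' : β ≤ 1) {n : ℕ}
    (hr : 2 ^ (n + 1) ≤ r) (hr' : r < 2 ^ (n + 2)) :
    (n + 1) ^ 2 * (2 ^ n : ℝ) ^ (-β) ≤ 16 * r ^ (-β) * Real.log r ^ 2 := by
  have hr0 : 0 < r := lt_of_lt_of_le (by positivity) hr
  have hlog : (n + 1 : ℝ) ≤ 2 * Real.log r := by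
    have h := Real.log_le_log (by positivity) hr
    rw [Real.log_pow] at h
    push_cast at h
    nlinarith [Real.log_two_gt_d9, n.cast_nonneg (α := ℝ)]
  have hpow : (2 ^ n : ℝ) ^ (-β) ≤ 4 * r ^ (-β) := by
    calc (2 ^ n : ℝ) ^ (-β) ≤ (r / 4) ^ (-β) :=
          Real.rpow_le_rpow_of_nonpos (by positivity)
            (by rw [div_le_iff₀ four_pos]; exact hr'.le.trans_eq (by ring)) (neg_nonpos.2 hβ)
      _ = 4 ^ β * r ^ (-β) := by
          rw [Real.div_rpow hr0.le four_pos.le, Real.rpow_neg four_pos.le, div_inv_eq_mul, mul_comm]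
      _ ≤ 4 * r ^ (-β) := by
          gcongr
          exact Real.rpow_le_self_of_one_le (by norm_num) hβ'
  calc (n + 1) ^ 2 * (2 ^ n : ℝ) ^ (-β)
      ≤ (2 * Real.log r) ^ 2 * (4 * r ^ (-β)) := by gcongr
    _ = 16 * r ^ (-β) * Real.log r ^ 2 := by ring

theorem IsBernoulliHalfProduct.measure_lt_ZΦ_runCells_le (hP : IsBernoulliHalfProduct P)
    (hd : 0 < d) {r : ℝ} (hr : 2 ≤ r) :
    P {γ | r < ZΦ (runCells d).rule γ} ≤ ENNReal.ofReal
      (16 * (unmatchedConst d + 1) * r ^ (-tailExponent d) * Real.log r ^ 2) := by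
  obtain ⟨n, hn, hn'⟩ := exists_nat_pow_near (one_le_div_iff.2 (.inl ⟨two_pos, hr⟩)) one_lt_two
  rw [le_div_iff₀ two_pos, ← pow_succ] at hn
  rw [div_lt_iff₀ two_pos, ← pow_succ] at hn'
  have hC := unmatchedConst_nonneg d
  calc P {γ | r < ZΦ (runCells d).rule γ}
      ≤ P {γ | 2 ^ (n + 1) < ZΦ (runCells d).rule γ} := measure_mono fun γ hγ => hn.trans_lt hγ
    _ ≤ ENNReal.ofReal
          ((unmatchedConst d + 1) * ((n + 1) ^ 2 * (2 ^ n) ^ (-tailExponent d))) :=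
        hP.measure_two_pow_lt_ZΦ_le hd n
    _ ≤ ENNReal.ofReal
          ((unmatchedConst d + 1) * (16 * r ^ (-tailExponent d) * Real.log r ^ 2)) := by
        refine ENNReal.ofReal_le_ofReal (mul_le_mul_of_nonneg_left ?_ (by positivity))
        exact succ_sq_mul_two_pow_rpow_neg_le (tailExponent_pos hd).le (tailExponent_le_one d)
          hn hn'
    _ = _ := by ring_nf

end TailEstimate

/-- Easy preliminary result: there exist `c₉ = c₉(d) < ∞` and a translation-equivariant
matching rule `Φ` with `ℙ(Z_Φ > r) ≤ c₉ r^{-d/(d+2)} (log r)²` for all `r ≥ 2`. -/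
theorem statement16 (d : ℕ) (hd : 1 ≤ d)
    (P : Measure (Config d)) (hP : IsBernoulliHalfProduct P) :
    ∃ (c₉ : ℝ) (Φ : Config d → Site d → Site d),
      IsMatchingRule P Φ ∧ IsEquivariant P Φ ∧
        ∀ r : ℝ, 2 ≤ r →
          P {γ | r < ZΦ Φ γ} ≤
            ENNReal.ofReal (c₉ * r ^ (-((d : ℝ) / ((d : ℝ) + 2))) * Real.log r ^ 2) :=
  ⟨16 * (unmatchedConst d + 1), (runCells d).rule, hP.isMatchingRule_runCells hd,
    (runCells d).isEquivariant_rule P, fun _ hr => hP.measure_lt_ZΦ_runCells_le hd hr⟩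

end
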